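/- Let μ be as in the class {μ} and M = M_μ. Then there exists A > 1 − c such that for all sufficiently large y: 0 < M(y) − y/2 < (A/2) · y / ln(y/2). -/

import Mathlib

open MeasureTheory Filter Real Set

/-- `Z(t)² = |ζ(1/2 + it)|²`, the square of Hardy's function. -/
noncomputable def Z2 (t : ℝ) : ℝ := ‖riemannZeta (1/2 + t * Complex.I)‖ ^ 2

/-!
Write `I x = ∫₀ˣ Z(t)² dt` and `D x = 2π ∑ d(n)` over `2πn ≤ x`. If `e ^ l = 2πi e^{-iδ}`, then
`Γ(s) e^{-sl} ζ(s)²` on the critical line is essentially `Z(t)² e^{-δt}`, while its integral over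
`Re s = 3/2` is `2π ∑ d(n) exp (-n e^l)`. As `e^l` is close to `2πi + 2πδ`, this series is close to
`2π ∑ d(n) e^{-2πnδ}`. Shifting the contour, the Laplace transforms of `Z(t)² dt` and `dD` differ by
`O(|δ|² (Re δ)^{-5/2})`, and testing against a smooth bump on `[T, T + H]` yields
`I(T) ≤ D(T + H) + O(T^{5/2} / H²)` and the same bound with `I` and `D` exchanged. Dirichlet's
divisor asymptotics then give `I(T) = T log T + (2γ - 1 - log 2π) T + o(T)`.

Since `∫ u log u e^{-u} du = 1 - γ`, averaging this gives
`∫ Z(t)² e^{-t/T} dt = T log T + (γ - log 2π) T + o(T)`, and cutting the integral off at `μ` changes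
it by `o(T)` only. For `T = y / 2` the left-hand side is `I(M y)`, and comparing the two expansions
gives `(M y / T - 1) log T → 1 - γ`.
-/

namespace HardyZ

open Complex (I)
open scoped Topology Interval

/-! ### The Gamma function on vertical lines -/

lemma norm_cpow_mul_exp_neg_mul (a z : ℂ) {t : ℝ} (ht : 0 < t) :
    ‖(t : ℂ) ^ (a - 1) * Complex.exp (-(z * t))‖ = t ^ (a.re - 1) * Real.exp (-(z.re * t)) := by
  rw [norm_mul, Complex.norm_cpow_eq_rpow_re_of_pos ht, Complex.norm_exp]
  simp

lemma aestronglyMeasurable_cpow_mul_exp_neg_mul (a z : ℂ) :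
    AEStronglyMeasurable (fun t : ℝ ↦ (t : ℂ) ^ (a - 1) * Complex.exp (-(z * t)))
      (volume.restrict (Ioi 0)) := by
  refine ContinuousOn.aestronglyMeasurable (.mul (fun t ht ↦ ?_) (by fun_prop)) measurableSet_Ioi
  exact (Complex.continuousAt_ofReal_cpow_const t _ (.inr ht.ne')).continuousWithinAt

lemma integrableOn_rpow_mul_exp_neg_mul {c b : ℝ} (hc : 0 < c) (hb : 0 < b) :
    IntegrableOn (fun t : ℝ ↦ t ^ (c - 1) * Real.exp (-(b * t))) (Ioi 0) := by
  simpa using integrableOn_rpow_mul_exp_neg_mul_rpow (s := c - 1) (by linarith) one_pos hb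

lemma integrableOn_cpow_mul_exp_neg_mul {a r : ℂ} (ha : 0 < a.re) (hr : 0 < r.re) :
    IntegrableOn (fun t : ℝ ↦ (t : ℂ) ^ (a - 1) * Complex.exp (-(r * t))) (Ioi 0) :=
  (integrableOn_rpow_mul_exp_neg_mul ha hr).mono' (aestronglyMeasurable_cpow_mul_exp_neg_mul a r) <|
    ae_restrict_of_forall_mem measurableSet_Ioi fun _ ht ↦ (norm_cpow_mul_exp_neg_mul a r ht).le

lemma differentiableAt_integral_cpow_mul_exp_neg_mul {a r : ℂ} (ha : 0 < a.re) (hr : 0 < r.re) :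
    DifferentiableAt ℂ
      (fun z ↦ ∫ t : ℝ in Ioi 0, (t : ℂ) ^ (a - 1) * Complex.exp (-(z * t))) r := by
  refine (hasDerivAt_integral_of_dominated_loc_of_deriv_le (μ := volume.restrict (Ioi 0))
    (F' := fun z t ↦ -((t : ℂ) ^ ((a + 1) - 1) * Complex.exp (-(z * t))))
    (bound := fun t ↦ t ^ ((a + 1).re - 1) * Real.exp (-(r.re / 2 * t)))
    (Metric.ball_mem_nhds r (half_pos hr))
    (.of_forall fun z ↦ aestronglyMeasurable_cpow_mul_exp_neg_mul a z)
    (integrableOn_cpow_mul_exp_neg_mul ha hr)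
    (aestronglyMeasurable_cpow_mul_exp_neg_mul (a + 1) r).neg
    (ae_restrict_of_forall_mem measurableSet_Ioi fun t ht z hz ↦ ?_)
    (integrableOn_rpow_mul_exp_neg_mul (by simp; linarith) (half_pos hr))
    (ae_restrict_of_forall_mem measurableSet_Ioi fun t ht z _ ↦ ?_)).2.differentiableAt
  · have ht : 0 < t := ht
    have hre : r.re / 2 ≤ z.re := by
      have h1 := (abs_lt.1 ((Complex.abs_re_le_norm (z - r)).trans_lt (mem_ball_iff_norm.1 hz))).1
      rw [Complex.sub_re] at h1
      linarith
    rw [norm_neg, norm_cpow_mul_exp_neg_mul _ _ ht]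
    gcongr
  · have hcpow : (t : ℂ) ^ ((a + 1) - 1) = (t : ℂ) ^ (a - 1) * t := by
      rw [show (a + 1) - 1 = (a - 1) + 1 by ring,
        Complex.cpow_add _ _ (Complex.ofReal_ne_zero.2 ht.ne'), Complex.cpow_one]
    have hexp := (hasDerivAt_mul_const (x := z) (t : ℂ)).fun_neg.cexp.const_mul ((t : ℂ) ^ (a - 1))
    convert! hexp using 1
    rw [hcpow]
    ring

/-- Both sides are analytic in the rate `r`, and for real `r` this is in Mathlib. -/
lemma integral_cpow_mul_exp_neg_mul {a r : ℂ} (ha : 0 < a.re) (hr : 0 < r.re) :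
    ∫ t : ℝ in Ioi 0, (t : ℂ) ^ (a - 1) * Complex.exp (-(r * t))
      = (1 / r) ^ a * Complex.Gamma a := by
  have hopen : IsOpen {z : ℂ | 0 < z.re} := isOpen_lt continuous_const Complex.continuous_re
  have hlhs : AnalyticOnNhd ℂ (fun z ↦ ∫ t : ℝ in Ioi 0, (t : ℂ) ^ (a - 1) * Complex.exp (-(z * t)))
      {z | 0 < z.re} := DifferentiableOn.analyticOnNhd (fun z hz ↦
    (differentiableAt_integral_cpow_mul_exp_neg_mul ha hz).differentiableWithinAt) hopen
  have hrhs : AnalyticOnNhd ℂ (fun z ↦ (1 / z) ^ a * Complex.Gamma a) {z | 0 < z.re} := by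
    refine DifferentiableOn.analyticOnNhd (fun z (hz : 0 < z.re) ↦ ?_) hopen
    have hz0 : z ≠ 0 := fun h ↦ by simp [h] at hz
    have hslit : 1 / z ∈ Complex.slitPlane := by
      rw [one_div]
      exact .inl (by rw [Complex.inv_re]; exact div_pos hz (Complex.normSq_pos.2 hz0))
    exact (((differentiableAt_const _).div differentiableAt_id hz0).cpow_const hslit
      |>.mul_const _).differentiableWithinAt
  have hfreq : ∃ᶠ z in 𝓝[≠] (1 : ℂ),
      ∫ t : ℝ in Ioi 0, (t : ℂ) ^ (a - 1) * Complex.exp (-(z * t))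
        = (1 / z) ^ a * Complex.Gamma a := by
    have hlim : Tendsto ((↑) : ℝ → ℂ) (𝓝[>] 1) (𝓝[≠] 1) :=
      tendsto_nhdsWithin_iff.2 ⟨(Complex.continuous_ofReal.tendsto' 1 1 rfl).mono_left
        nhdsWithin_le_nhds, eventually_nhdsWithin_of_forall fun x hx ↦ by
          simpa using (ne_of_gt hx : x ≠ 1)⟩
    refine hlim.frequently (Eventually.frequently ?_)
    filter_upwards [self_mem_nhdsWithin] with x hx
    exact Complex.integral_cpow_mul_exp_neg_mul_Ioi ha (one_pos.trans hx)
  exact hlhs.eqOn_of_preconnected_of_frequently_eq hrhs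
    (convex_halfSpace_re_gt 0).isPreconnected (by simp) hfreq hr

lemma re_exp_pos {l : ℂ} (hl : |l.im| < π / 2) : 0 < (Complex.exp l).re := by
  rw [Complex.exp_re]
  exact mul_pos (Real.exp_pos _) (Real.cos_pos_of_mem_Ioo (abs_lt.1 hl))

lemma integral_cpow_mul_exp_neg_exp_mul {a l : ℂ} (ha : 0 < a.re) (hl : |l.im| < π / 2) :
    ∫ t : ℝ in Ioi 0, (t : ℂ) ^ (a - 1) * Complex.exp (-(Complex.exp l * t))
      = Complex.Gamma a * Complex.exp (-(a * l)) := by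
  have hlog : Complex.log (Complex.exp (-l)) = -l := by
    obtain ⟨h1, h2⟩ := abs_lt.1 hl
    exact Complex.log_exp (by simp; linarith [pi_pos]) (by simp; linarith [pi_pos])
  rw [integral_cpow_mul_exp_neg_mul ha (re_exp_pos hl), one_div, ← Complex.exp_neg,
    Complex.cpow_def_of_ne_zero (Complex.exp_ne_zero _), hlog, mul_comm]
  congr 2
  ring

lemma norm_Gamma_add_mul_I_le_of_abs_lt {c θ : ℝ} (t : ℝ) (hc : 0 < c) (hθ : |θ| < π / 2) :
    ‖Complex.Gamma (c + t * I)‖ ≤ Real.Gamma c * Real.cos θ ^ (-c) * Real.exp (-(θ * t)) := by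
  have hcos : 0 < Real.cos θ := Real.cos_pos_of_mem_Ioo (abs_lt.1 hθ)
  have hnorm : ‖Complex.Gamma (c + t * I) * Complex.exp (-((c + t * I) * (θ * I)))‖
      ≤ Real.Gamma c * Real.cos θ ^ (-c) := by
    rw [← integral_cpow_mul_exp_neg_exp_mul (by simpa using hc) (by simpa using hθ)]
    refine (norm_integral_le_integral_norm _).trans_eq ?_
    rw [setIntegral_congr_fun measurableSet_Ioi fun u hu ↦ norm_cpow_mul_exp_neg_mul _ _ hu]
    rw [Complex.exp_ofReal_mul_I_re, show (c + t * I : ℂ).re = c by simp,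
      Real.integral_rpow_mul_exp_neg_mul_Ioi hc hcos, one_div, Real.inv_rpow hcos.le,
      Real.rpow_neg hcos.le, mul_comm]
  have hexp : ‖Complex.exp (-((c + t * I) * (θ * I)))‖ = Real.exp (θ * t) := by
    rw [Complex.norm_exp]
    congr 1
    simp [mul_comm]
  rwa [norm_mul, hexp, ← le_div_iff₀ (Real.exp_pos _), div_eq_mul_inv, ← Real.exp_neg] at hnorm

lemma norm_Gamma_add_mul_I_le {c θ : ℝ} (t : ℝ) (hc : 0 < c) (hθ0 : 0 ≤ θ) (hθ : θ < π / 2) :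
    ‖Complex.Gamma (c + t * I)‖ ≤ Real.Gamma c * Real.cos θ ^ (-c) * Real.exp (-(θ * |t|)) := by
  rcases abs_cases t with ⟨ht, -⟩ | ⟨ht, -⟩ <;> rw [ht]
  · exact norm_Gamma_add_mul_I_le_of_abs_lt t hc (by rwa [abs_of_nonneg hθ0])
  · simpa using norm_Gamma_add_mul_I_le_of_abs_lt (θ := -θ) t hc
      (by rwa [abs_neg, abs_of_nonneg hθ0])

lemma exists_norm_Gamma_add_mul_I_le {a b θ : ℝ} (ha : 0 < a) (hθ0 : 0 ≤ θ) (hθ : θ < π / 2) :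
    ∃ C, ∀ c ∈ Icc a b, ∀ t : ℝ, ‖Complex.Gamma (c + t * I)‖ ≤ C * Real.exp (-(θ * |t|)) := by
  have hcos : 0 < Real.cos θ := Real.cos_pos_of_mem_Ioo ⟨by linarith [pi_pos], hθ⟩
  have hcont : ContinuousOn (fun c ↦ Real.Gamma c * Real.cos θ ^ (-c)) (Icc a b) := fun c hc ↦ by
    have hΓ := (Real.differentiableAt_Gamma (s := c) fun m ↦ by
      linarith [ha.trans_le hc.1, m.cast_nonneg (α := ℝ)]).continuousAt
    exact (hΓ.mul (continuousAt_const.rpow continuousAt_id.neg (.inl hcos.ne'))).continuousWithinAt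
  obtain ⟨C, hC⟩ := isCompact_Icc.bddAbove_image hcont
  refine ⟨C, fun c hc t ↦ (norm_Gamma_add_mul_I_le t (ha.trans_le hc.1) hθ0 hθ).trans ?_⟩
  gcongr
  exact hC (mem_image_of_mem _ hc)

lemma norm_Gamma_half_add_mul_I_sq (t : ℝ) :
    ‖Complex.Gamma (1 / 2 + t * I)‖ ^ 2 = π / Real.cosh (π * t) := by
  have hconj : (1 - (1 / 2 + t * I) : ℂ) = (starRingEnd ℂ) (1 / 2 + t * I) := by
    apply Complex.ext <;> norm_num
  have hsin : Complex.sin (π * (1 / 2 + t * I)) = (Real.cosh (π * t) : ℝ) := by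
    rw [show (π * (1 / 2 + t * I) : ℂ) = (π * t : ℂ) * I + π / 2 by ring,
      Complex.sin_add_pi_div_two, Complex.cos_mul_I]
    push_cast
    rfl
  have hreflection := Complex.Gamma_mul_Gamma_one_sub (1 / 2 + t * I)
  rw [hconj, Complex.Gamma_conj, Complex.mul_conj, hsin, Complex.normSq_eq_norm_sq] at hreflection
  exact_mod_cast hreflection

lemma norm_Gamma_half_add_mul_I_le (t : ℝ) :
    ‖Complex.Gamma (1 / 2 + t * I)‖ ≤ √(2 * π) * Real.exp (-(π / 2 * |t|)) := by
  refine le_of_sq_le_sq ?_ (by positivity)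
  have hcosh : Real.exp (π * |t|) / 2 ≤ Real.cosh (π * t) := by
    rw [← Real.cosh_abs, abs_mul, abs_of_pos pi_pos, Real.cosh_eq]
    linarith [Real.exp_pos (-(π * |t|))]
  calc ‖Complex.Gamma (1 / 2 + t * I)‖ ^ 2 = π / Real.cosh (π * t) := norm_Gamma_half_add_mul_I_sq t
    _ ≤ π / (Real.exp (π * |t|) / 2) := by gcongr
    _ = 2 * π * Real.exp (-(π * |t|)) := by rw [Real.exp_neg]; field_simp
    _ = (√(2 * π) * Real.exp (-(π / 2 * |t|))) ^ 2 := by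
      rw [mul_pow, Real.sq_sqrt (by positivity), ← Real.exp_nat_mul]
      congr 2
      push_cast
      ring

lemma continuous_Gamma_add_mul_I {c : ℝ} (hc : 0 < c) :
    Continuous fun t : ℝ ↦ Complex.Gamma (c + t * I) := by
  refine continuous_iff_continuousAt.2 fun t ↦ ?_
  refine ContinuousAt.comp (f := fun t : ℝ ↦ (c + t * I : ℂ)) ?_ (by fun_prop)
  refine (Complex.differentiableAt_Gamma _ fun m h ↦ ?_).continuousAt
  have hre : c = -m := by simpa using congrArg Complex.re h
  linarith [m.cast_nonneg (α := ℝ)]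

/-! ### Exponential decay on vertical lines -/

lemma exists_one_add_abs_pow_mul_exp_le (n : ℕ) {b b' : ℝ} (hb : b' < b) :
    ∃ K, ∀ t : ℝ, (1 + |t|) ^ n * Real.exp (-(b * |t|)) ≤ K * Real.exp (-(b' * |t|)) := by
  have := sub_pos.2 hb
  refine ⟨n.factorial / (b - b') ^ n * Real.exp (b - b'), fun t ↦ ?_⟩
  have hpow : (1 + |t|) ^ n ≤ n.factorial / (b - b') ^ n * Real.exp ((b - b') * (1 + |t|)) := by
    have h := Real.pow_div_factorial_le_exp ((b - b') * (1 + |t|)) (by positivity) n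
    rw [mul_pow, div_le_iff₀ (by positivity)] at h
    rw [div_mul_eq_mul_div, le_div_iff₀ (by positivity)]
    linarith
  calc (1 + |t|) ^ n * Real.exp (-(b * |t|))
      ≤ n.factorial / (b - b') ^ n * Real.exp ((b - b') * (1 + |t|)) * Real.exp (-(b * |t|)) := by
        gcongr
    _ = n.factorial / (b - b') ^ n * Real.exp (b - b') * Real.exp (-(b' * |t|)) := by
        rw [mul_assoc, mul_assoc, ← Real.exp_add, ← Real.exp_add]
        congr 2
        ring

lemma integrable_exp_neg_mul_abs {b : ℝ} (hb : 0 < b) :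
    Integrable fun t : ℝ ↦ Real.exp (-(b * |t|)) := by
  rw [← integrableOn_univ, ← Iic_union_Ioi (a := (0 : ℝ))]
  refine .union ((integrableOn_exp_mul_Iic hb 0).congr_fun (fun t ht ↦ ?_) measurableSet_Iic)
    ((integrableOn_exp_mul_Ioi (neg_lt_zero.2 hb) 0).congr_fun (fun t ht ↦ ?_) measurableSet_Ioi)
  · simp [abs_of_nonpos (mem_Iic.1 ht)]
  · simp [abs_of_pos (mem_Ioi.1 ht)]

lemma integral_exp_neg_mul_abs {b : ℝ} (hb : 0 < b) :
    ∫ t : ℝ, Real.exp (-(b * |t|)) = 2 / b := by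
  rw [integral_comp_abs (f := fun t ↦ Real.exp (-(b * t)))]
  have h := integral_exp_mul_Ioi (neg_lt_zero.2 hb) 0
  simp only [neg_mul, mul_zero, Real.exp_zero] at h
  rw [h]
  field_simp

/-! ### Shifting contours between vertical lines -/

/-- Cauchy's theorem on the rectangles of height `2R` between the two lines, as `R → ∞`. -/
lemma integral_vertical_line_eq {f : ℂ → ℂ} {a b : ℝ} {g : ℝ → ℝ} (hab : a ≤ b)
    (hf : DifferentiableOn ℂ f (Complex.re ⁻¹' Icc a b)) (hg : Tendsto g atTop (𝓝 0))
    (hfg : ∀ c ∈ Icc a b, ∀ t : ℝ, ‖f (c + t * I)‖ ≤ g |t|)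
    (ha : Integrable fun t : ℝ ↦ f (a + t * I)) (hb : Integrable fun t : ℝ ↦ f (b + t * I)) :
    ∫ t : ℝ, f (b + t * I) = ∫ t : ℝ, f (a + t * I) := by
  have hrect (R : ℝ) : (∫ x : ℝ in a..b, f (x + (-R : ℝ) * I)) - (∫ x : ℝ in a..b, f (x + R * I))
      + I * (∫ t : ℝ in (-R)..R, f (b + t * I)) - I * (∫ t : ℝ in (-R)..R, f (a + t * I)) = 0 := by
    have hsubset : [[a, b]] ×ℂ [[-R, R]] ⊆ Complex.re ⁻¹' Icc a b := fun s hs ↦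
      uIcc_of_le hab ▸ (Complex.mem_reProdIm.1 hs).1
    simpa using! Complex.integral_boundary_rect_eq_zero_of_differentiableOn f ⟨a, -R⟩ ⟨b, R⟩
      (hf.mono hsubset)
  have hvertical {c : ℝ} (hc : Integrable fun t : ℝ ↦ f (c + t * I)) :
      Tendsto (fun R : ℝ ↦ ∫ t : ℝ in (-R)..R, f (c + t * I)) atTop
        (𝓝 (∫ t : ℝ, f (c + t * I))) :=
    intervalIntegral_tendsto_integral hc tendsto_neg_atTop_atBot tendsto_id
  have hhorizontal {r : ℝ → ℝ} (hr : ∀ᶠ R in atTop, |r R| = R) :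
      Tendsto (fun R : ℝ ↦ ∫ x : ℝ in a..b, f (x + r R * I)) atTop (𝓝 0) := by
    refine squeeze_zero_norm' ?_ (by simpa using hg.mul_const |b - a|)
    filter_upwards [hr] with R hR
    refine intervalIntegral.norm_integral_le_of_norm_le_const fun x hx ↦ ?_
    rw [uIoc_of_le hab] at hx
    simpa [hR] using hfg x (Ioc_subset_Icc_self hx) (r R)
  have hupper := hhorizontal (r := id)
    ((eventually_ge_atTop 0).mono fun R hR ↦ abs_of_nonneg hR)
  have hlower := hhorizontal (r := fun R ↦ -R)
    ((eventually_ge_atTop 0).mono fun R hR ↦ by rw [abs_neg, abs_of_nonneg hR])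
  have hlim := ((hlower.sub hupper).add ((hvertical hb).const_mul I)).sub
    ((hvertical ha).const_mul I)
  have h := tendsto_nhds_unique (hlim.congr hrect) tendsto_const_nhds
  rw [sub_self, zero_add, ← mul_sub, mul_eq_zero] at h
  exact sub_eq_zero.1 (h.resolve_left Complex.I_ne_zero)

/-! ### Mellin inversion of `exp (-e^l)` -/

/-- The function `s ↦ Γ(s) e^{-sl}`, the Mellin transform of `u ↦ exp (-e^l u)`. On the critical
line its size for `Im l = π / 2 - σ` is essentially `e^{-σt}`. -/
noncomputable def gammaKernel (l s : ℂ) : ℂ := Complex.Gamma s * Complex.exp (-(s * l))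

lemma norm_exp_neg_line_mul (c t : ℝ) (l : ℂ) :
    ‖Complex.exp (-((c + t * I) * l))‖ = Real.exp (-(c * l.re)) * Real.exp (t * l.im) := by
  rw [Complex.norm_exp, ← Real.exp_add]
  congr 1
  simp
  ring

lemma exists_one_add_abs_pow_mul_norm_gammaKernel_le (n : ℕ) {a b : ℝ} {l : ℂ} (ha : 0 < a)
    (hl : |l.im| < π / 2) :
    ∃ C, ∃ ε > 0, ∀ c ∈ Icc a b, ∀ t : ℝ,
      (1 + |t|) ^ n * ‖gammaKernel l (c + t * I)‖ ≤ C * Real.exp (-(ε * |t|)) := by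
  obtain ⟨θ, hlθ, hθ⟩ := exists_between hl
  obtain ⟨C, hC⟩ := exists_norm_Gamma_add_mul_I_le (b := b) ha ((abs_nonneg _).trans hlθ.le) hθ
  have hε : 0 < θ - |l.im| := sub_pos.2 hlθ
  obtain ⟨K, hK⟩ := exists_one_add_abs_pow_mul_exp_le n (half_lt_self hε)
  refine ⟨C * Real.exp (b * |l.re|) * K, (θ - |l.im|) / 2, half_pos hε, fun c hc t ↦ ?_⟩
  have hC0 : 0 ≤ C :=
    nonneg_of_mul_nonneg_left ((norm_nonneg _).trans (hC c hc t)) (Real.exp_pos _)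
  have hre : -(c * l.re) ≤ b * |l.re| := by
    nlinarith [neg_abs_le l.re, abs_nonneg l.re, hc.1, hc.2]
  have him : t * l.im ≤ |l.im| * |t| := by
    rw [← abs_mul, mul_comm]
    exact le_abs_self _
  calc (1 + |t|) ^ n * ‖gammaKernel l (c + t * I)‖
      ≤ (1 + |t|) ^ n * (C * Real.exp (-(θ * |t|))
          * (Real.exp (b * |l.re|) * Real.exp (|l.im| * |t|))) := by
        rw [gammaKernel, norm_mul, norm_exp_neg_line_mul]
        gcongr
        exact hC c hc t
    _ = C * Real.exp (b * |l.re|) * ((1 + |t|) ^ n * Real.exp (-((θ - |l.im|) * |t|))) := by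
        rw [show -((θ - |l.im|) * |t|) = -(θ * |t|) + |l.im| * |t| by ring, Real.exp_add]
        ring
    _ ≤ C * Real.exp (b * |l.re|) * (K * Real.exp (-((θ - |l.im|) / 2 * |t|))) :=
        mul_le_mul_of_nonneg_left (hK t) (by positivity)
    _ = C * Real.exp (b * |l.re|) * K * Real.exp (-((θ - |l.im|) / 2 * |t|)) := by ring

lemma continuous_gammaKernel_line (l : ℂ) {c : ℝ} (hc : 0 < c) :
    Continuous fun t : ℝ ↦ gammaKernel l (c + t * I) :=
  (continuous_Gamma_add_mul_I hc).mul (by fun_prop)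

lemma integrable_gammaKernel_mul (n : ℕ) {l : ℂ} {c K : ℝ} {φ : ℝ → ℂ} (hc : 0 < c)
    (hl : |l.im| < π / 2) (hφ : Continuous φ) (hK : ∀ t, ‖φ t‖ ≤ K * (1 + |t|) ^ n) :
    Integrable fun t : ℝ ↦ gammaKernel l (c + t * I) * φ t := by
  obtain ⟨C, ε, hε, hC⟩ := exists_one_add_abs_pow_mul_norm_gammaKernel_le n (b := c) hc hl
  have hK0 : 0 ≤ K := by simpa using (norm_nonneg _).trans (hK 0)
  refine ((integrable_exp_neg_mul_abs hε).const_mul (K * C)).mono'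
    ((continuous_gammaKernel_line l hc).mul hφ).aestronglyMeasurable (.of_forall fun t ↦ ?_)
  calc ‖gammaKernel l (c + t * I) * φ t‖
      ≤ ‖gammaKernel l (c + t * I)‖ * (K * (1 + |t|) ^ n) := by
        rw [norm_mul]
        gcongr
        exact hK t
    _ = K * ((1 + |t|) ^ n * ‖gammaKernel l (c + t * I)‖) := by ring
    _ ≤ K * (C * Real.exp (-(ε * |t|))) :=
        mul_le_mul_of_nonneg_left (hC c ⟨le_rfl, le_rfl⟩ t) hK0
    _ = K * C * Real.exp (-(ε * |t|)) := by ring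

lemma integrable_gammaKernel {l : ℂ} {c : ℝ} (hc : 0 < c) (hl : |l.im| < π / 2) :
    Integrable fun t : ℝ ↦ gammaKernel l (c + t * I) := by
  simpa using integrable_gammaKernel_mul 0 (K := 1) (φ := fun _ ↦ 1) hc hl continuous_const
    (by simp)

lemma integral_gammaKernel {l : ℂ} {c : ℝ} (hc : 0 < c) (hl : |l.im| < π / 2) :
    ∫ t : ℝ, gammaKernel l (c + t * I) = 2 * π * Complex.exp (-Complex.exp l) := by
  have hmellin (t : ℝ) : mellin (fun u : ℝ ↦ Complex.exp (-(Complex.exp l * u))) (c + t * I)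
      = gammaKernel l (c + t * I) :=
    integral_cpow_mul_exp_neg_exp_mul (by simpa using hc) hl
  have hinv := mellinInv_mellin_eq c (fun u : ℝ ↦ Complex.exp (-(Complex.exp l * u))) one_pos
    (integrableOn_cpow_mul_exp_neg_mul (by simpa using hc) (re_exp_pos hl))
    ((integrable_gammaKernel hc hl).congr (.of_forall fun t ↦ (hmellin t).symm)) (by fun_prop)
  simp only [mellinInv, Complex.ofReal_one, Complex.one_cpow, one_smul, hmellin, mul_one,
    Complex.real_smul] at hinv
  rw [← hinv, ← mul_assoc]
  push_cast
  rw [mul_one_div_cancel (by simp [pi_ne_zero]), one_mul]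

/-! ### Growth of the zeta function to the right of the imaginary axis -/

/-- The fractional part on `(1, ∞)`, extended by zero; its Mellin transform continues `ζ` to the
half-plane `Re s > 0`. -/
noncomputable def truncatedFract : ℝ → ℂ := indicator (Ioi 1) fun x : ℝ ↦ ((Int.fract x : ℝ) : ℂ)

lemma norm_truncatedFract_le (x : ℝ) : ‖truncatedFract x‖ ≤ 1 := by
  refine (norm_indicator_le_norm_self _ x).trans ?_
  rw [Complex.norm_real, Real.norm_of_nonneg (Int.fract_nonneg x)]
  exact (Int.fract_lt_one x).le

lemma measurable_truncatedFract : Measurable truncatedFract :=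
  (Complex.measurable_ofReal.comp measurable_fract).indicator measurableSet_Ioi

lemma differentiableAt_mellin_truncatedFract {s : ℂ} (hs : s.re < 0) :
    DifferentiableAt ℂ (mellin truncatedFract) s := by
  refine mellin_differentiableAt_of_isBigO_rpow (a := 0) (b := s.re - 1) ?_ ?_ hs ?_ (by linarith)
  · refine LocallyIntegrable.locallyIntegrableOn ?_ _
    exact (locallyIntegrable_const (1 : ℝ)).mono measurable_truncatedFract.aestronglyMeasurable
      (.of_forall fun x ↦ by simpa using norm_truncatedFract_le x)
  · exact .of_bound 1 (.of_forall fun x ↦ by simpa using norm_truncatedFract_le x)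
  · have hzero : truncatedFract =ᶠ[𝓝[>] 0] 0 := by
      filter_upwards [mem_nhdsWithin_of_mem_nhds (Iio_mem_nhds one_pos)] with x hx
      exact indicator_of_notMem (notMem_Ioi.2 (mem_Iio.1 hx).le) _
    exact hzero.trans_isBigO (Asymptotics.isBigO_zero _ _)

lemma mellin_truncatedFract_neg (s : ℂ) :
    mellin truncatedFract (-s)
      = ∫ t in Ioi (1 : ℝ), ((Int.fract t : ℝ) : ℂ) * (t : ℂ) ^ (-(s + 1)) := by
  have hindicator (t : ℝ) : (t : ℂ) ^ (-s - 1) • truncatedFract t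
      = indicator (Ioi 1) (fun t : ℝ ↦ ((Int.fract t : ℝ) : ℂ) * (t : ℂ) ^ (-(s + 1))) t := by
    rw [neg_add']
    by_cases ht : 1 < t <;> simp [truncatedFract, ht, mul_comm]
  simp_rw [mellin, hindicator]
  rw [setIntegral_indicator measurableSet_Ioi, Ioi_inter_Ioi]
  simp

lemma norm_mellin_truncatedFract_neg_le {s : ℂ} (hs : 0 < s.re) :
    ‖mellin truncatedFract (-s)‖ ≤ 1 / s.re := by
  have hint : ∫ t in Ioi (1 : ℝ), t ^ (-(s.re + 1)) = 1 / s.re := by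
    rw [integral_Ioi_rpow_of_lt (by linarith) one_pos]
    simp
  rw [mellin_truncatedFract_neg, ← hint]
  refine norm_integral_le_of_norm_le (integrableOn_Ioi_rpow_of_lt (by linarith) one_pos) ?_
  refine ae_restrict_of_forall_mem measurableSet_Ioi fun t ht ↦ ?_
  have ht0 : 0 < t := one_pos.trans ht
  rw [norm_mul, Complex.norm_cpow_eq_rpow_re_of_pos ht0, Complex.norm_real,
    Real.norm_of_nonneg (Int.fract_nonneg t)]
  simpa using mul_le_mul_of_nonneg_right (Int.fract_lt_one t).le (rpow_nonneg ht0.le _)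

lemma riemannZeta_eq_mul_integral_floor {s : ℂ} (hs : 1 < s.re) :
    riemannZeta s = s * ∫ t in Ioi (1 : ℝ), (⌊t⌋₊ : ℂ) * (t : ℂ) ^ (-(s + 1)) := by
  rw [← LSeries_one_eq_riemannZeta hs, LSeries_eq_mul_integral 1 zero_le_one hs
    (LSeriesSummable_one_iff.2 hs) (.of_bound 1 (.of_forall fun n ↦ by simp))]
  simp

lemma riemannZeta₀_eq_of_one_lt_re {s : ℂ} (hs : 1 < s.re) :
    riemannZeta₀ s = 1 - s * mellin truncatedFract (-s) := by
  have hs1 : s - 1 ≠ 0 := sub_ne_zero.2 fun h ↦ by simp [h] at hs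
  have hre : (-s).re < -1 := by simpa using hs
  have hcpow {t : ℝ} (ht : t ∈ Ioi 1) : (t : ℂ) ^ (-s) = t * (t : ℂ) ^ (-(s + 1)) := by
    rw [show -s = 1 + -(s + 1) by ring,
      Complex.cpow_add _ _ (Complex.ofReal_ne_zero.2 (one_pos.trans ht).ne'), Complex.cpow_one]
  have hfract : IntegrableOn
      (fun t : ℝ ↦ ((Int.fract t : ℝ) : ℂ) * (t : ℂ) ^ (-(s + 1))) (Ioi 1) := by
    refine (integrableOn_Ioi_cpow_of_lt (a := -(s + 1)) (by simp; linarith) one_pos).bdd_mul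
      (c := 1) (Complex.measurable_ofReal.comp measurable_fract).aestronglyMeasurable
      (.of_forall fun t ↦ ?_)
    rw [Complex.norm_real, Real.norm_of_nonneg (Int.fract_nonneg t)]
    exact (Int.fract_lt_one t).le
  have hfloor : ∫ t in Ioi (1 : ℝ), (⌊t⌋₊ : ℂ) * (t : ℂ) ^ (-(s + 1))
      = (s - 1)⁻¹ - mellin truncatedFract (-s) := by
    have hpower : ∫ t in Ioi (1 : ℝ), (t : ℂ) ^ (-s) = (s - 1)⁻¹ := by
      rw [integral_Ioi_cpow_of_lt hre one_pos, Complex.ofReal_one, Complex.one_cpow,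
        inv_eq_one_div, ← neg_div_neg_eq]
      ring
    rw [mellin_truncatedFract_neg, ← hpower,
      ← integral_sub (integrableOn_Ioi_cpow_of_lt hre one_pos) hfract]
    refine setIntegral_congr_fun measurableSet_Ioi fun t ht ↦ ?_
    have hfloor : ((⌊t⌋₊ : ℝ) : ℂ) = t - ((Int.fract t : ℝ) : ℂ) := by
      rw [natCast_floor_eq_intCast_floor (one_pos.trans ht).le, ← Complex.ofReal_sub,
        Int.self_sub_fract]
    simp only [hcpow ht, ← sub_mul, ← hfloor, Complex.ofReal_natCast]
  have hzeta := riemannZeta_eq_mul_integral_floor hs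
  rw [riemannZeta_eq_inv_sub_add (sub_ne_zero.1 hs1), hfloor] at hzeta
  rw [eq_sub_of_add_eq' hzeta]
  field_simp
  ring

lemma riemannZeta₀_eq {s : ℂ} (hs : 0 < s.re) :
    riemannZeta₀ s = 1 - s * mellin truncatedFract (-s) := by
  have hopen : IsOpen {z : ℂ | 0 < z.re} := isOpen_lt continuous_const Complex.continuous_re
  have hright : AnalyticOnNhd ℂ (fun s ↦ 1 - s * mellin truncatedFract (-s)) {z | 0 < z.re} := by
    refine DifferentiableOn.analyticOnNhd (fun z (hz : 0 < z.re) ↦ ?_) hopen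
    have hmellin := (differentiableAt_mellin_truncatedFract (s := -z) (by simpa using hz)).comp z
      differentiable_neg.differentiableAt
    exact (differentiableAt_id.fun_mul hmellin |>.const_sub _).differentiableWithinAt
  refine (differentiable_riemannZeta₀.differentiableOn.analyticOnNhd
    hopen).eqOn_of_preconnected_of_eventuallyEq hright (convex_halfSpace_re_gt 0).isPreconnected
    (z₀ := 2) (by simp) ?_ hs
  filter_upwards [(isOpen_lt continuous_const Complex.continuous_re).mem_nhds
    (show (1 : ℝ) < (2 : ℂ).re by simp)] with z hz using riemannZeta₀_eq_of_one_lt_re hz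

lemma norm_riemannZeta₀_le {s : ℂ} (hs : 0 < s.re) : ‖riemannZeta₀ s‖ ≤ 1 + ‖s‖ / s.re := by
  calc ‖riemannZeta₀ s‖ ≤ ‖(1 : ℂ)‖ + ‖s * mellin truncatedFract (-s)‖ := by
        rw [riemannZeta₀_eq hs]
        exact norm_sub_le _ _
    _ ≤ 1 + ‖s‖ * (1 / s.re) := by
        rw [norm_one, norm_mul]
        gcongr
        exact norm_mellin_truncatedFract_neg_le hs
    _ = 1 + ‖s‖ / s.re := by rw [mul_one_div]

lemma norm_riemannZeta₀_add_mul_I_le {a b c : ℝ} (ha : 0 < a) (hc : c ∈ Icc a b) (t : ℝ) :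
    ‖riemannZeta₀ (c + t * I)‖ ≤ (1 + (b + 1) / a) * (1 + |t|) := by
  have hc0 : 0 < c := ha.trans_le hc.1
  have hb0 : 0 < b := hc0.trans_le hc.2
  have hnorm : ‖(c + t * I : ℂ)‖ ≤ b + |t| := by
    refine (norm_add_le _ _).trans ?_
    rw [norm_mul, Complex.norm_I, mul_one, Complex.norm_real, Complex.norm_real,
      Real.norm_of_nonneg hc0.le, Real.norm_eq_abs]
    gcongr
    exact hc.2
  calc ‖riemannZeta₀ (c + t * I)‖ ≤ 1 + ‖(c + t * I : ℂ)‖ / c := by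
        simpa using norm_riemannZeta₀_le (s := c + t * I) (by simpa using hc0)
    _ ≤ 1 + (b + |t|) / a := by
        gcongr
        exact hc.1
    _ ≤ 1 + |t| + (b + 1) * (1 + |t|) / a := by
        gcongr
        · linarith [abs_nonneg t]
        · nlinarith [abs_nonneg t]
    _ = (1 + (b + 1) / a) * (1 + |t|) := by ring

/-! ### The square of the zeta function near its pole -/

/-- The polar part of `ζ²` at `s = 1`. -/
noncomputable def zetaSqPolar (s : ℂ) : ℂ := (s - 1)⁻¹ ^ 2 + 2 * eulerMascheroniConstant * (s - 1)⁻¹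

/-- The entire function `ζ² - zetaSqPolar`, written through `ζ₀(s) = ζ(s) - 1 / (s - 1)` so that the
value at `s = 1` is the correct one. -/
noncomputable def zetaSqRegular (s : ℂ) : ℂ := 2 * dslope riemannZeta₀ 1 s + riemannZeta₀ s ^ 2

lemma riemannZeta_sq_eq {s : ℂ} (hs : s ≠ 1) :
    riemannZeta s ^ 2 = zetaSqRegular s + zetaSqPolar s := by
  rw [zetaSqRegular, zetaSqPolar, dslope_of_ne _ hs, slope_def_field, riemannZeta₀_one,
    riemannZeta_eq_inv_sub_add hs]
  field_simp
  ring

lemma differentiable_dslope_riemannZeta₀ : Differentiable ℂ (dslope riemannZeta₀ 1) := by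
  rw [← differentiableOn_univ]
  exact (Complex.differentiableOn_dslope univ_mem).2 differentiable_riemannZeta₀.differentiableOn

lemma differentiable_zetaSqRegular : Differentiable ℂ zetaSqRegular :=
  (differentiable_dslope_riemannZeta₀.const_mul 2).add (differentiable_riemannZeta₀.pow 2)

lemma exists_norm_dslope_riemannZeta₀_le :
    ∃ K, ∀ s, ‖dslope riemannZeta₀ 1 s‖ ≤ K + ‖riemannZeta₀ s‖ := by
  obtain ⟨B, hB⟩ := (isCompact_closedBall (1 : ℂ) 1).exists_bound_of_continuousOn
    differentiable_dslope_riemannZeta₀.continuous.continuousOn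
  have hγ : 0 ≤ ‖(eulerMascheroniConstant : ℂ)‖ := norm_nonneg _
  have hB0 : 0 ≤ B := (norm_nonneg _).trans (hB 1 (by simp))
  refine ⟨B + ‖(eulerMascheroniConstant : ℂ)‖, fun s ↦ ?_⟩
  rcases le_or_gt ‖s - 1‖ 1 with hs | hs
  · linarith [hB s (mem_closedBall_iff_norm.2 hs), norm_nonneg (riemannZeta₀ s)]
  · rw [dslope_of_ne _ (sub_ne_zero.1 (norm_pos_iff.1 (one_pos.trans hs))), slope_def_field,
      riemannZeta₀_one, norm_div]
    refine (div_le_self (norm_nonneg _) hs.le).trans ((norm_sub_le _ _).trans ?_)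
    linarith

lemma exists_norm_zetaSqRegular_le {a : ℝ} (b : ℝ) (ha : 0 < a) :
    ∃ K, ∀ c ∈ Icc a b, ∀ t : ℝ, ‖zetaSqRegular (c + t * I)‖ ≤ K * (1 + |t|) ^ 2 := by
  obtain ⟨B, hB⟩ := exists_norm_dslope_riemannZeta₀_le
  refine ⟨2 * (|B| + (1 + (b + 1) / a)) + (1 + (b + 1) / a) ^ 2, fun c hc t ↦ ?_⟩
  have hζ := norm_riemannZeta₀_add_mul_I_le ha hc t
  have hone : 1 ≤ 1 + |t| := le_add_of_nonneg_right (abs_nonneg t)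
  have hb : 0 < b := ha.trans_le (hc.1.trans hc.2)
  calc ‖zetaSqRegular (c + t * I)‖
      ≤ 2 * ‖dslope riemannZeta₀ 1 (c + t * I)‖ + ‖riemannZeta₀ (c + t * I)‖ ^ 2 := by
        refine (norm_add_le _ _).trans_eq ?_
        rw [norm_mul, Complex.norm_two, norm_pow]
    _ ≤ 2 * (|B| * (1 + |t|) + (1 + (b + 1) / a) * (1 + |t|))
          + ((1 + (b + 1) / a) * (1 + |t|)) ^ 2 := by
        gcongr
        refine (hB _).trans (add_le_add ?_ hζ)
        exact (le_abs_self B).trans (le_mul_of_one_le_right (abs_nonneg B) hone)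
    _ = 2 * (|B| + (1 + (b + 1) / a)) * (1 + |t|) + (1 + (b + 1) / a) ^ 2 * (1 + |t|) ^ 2 := by
        ring
    _ ≤ 2 * (|B| + (1 + (b + 1) / a)) * (1 + |t|) ^ 2
          + (1 + (b + 1) / a) ^ 2 * (1 + |t|) ^ 2 := by
        gcongr
        exact le_self_pow₀ hone two_ne_zero
    _ = (2 * (|B| + (1 + (b + 1) / a)) + (1 + (b + 1) / a) ^ 2) * (1 + |t|) ^ 2 := by ring

lemma add_mul_I_ne_one {c : ℝ} (hc : c ≠ 1) (t : ℝ) : (c + t * I : ℂ) ≠ 1 :=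
  fun h ↦ hc (by simpa using congrArg Complex.re h)

lemma norm_zetaSqPolar_le (s : ℂ) :
    ‖zetaSqPolar s‖ ≤ (‖(s - 1)⁻¹‖ + 2) * ‖(s - 1)⁻¹‖ := by
  have hγ : ‖(eulerMascheroniConstant : ℂ)‖ ≤ 1 := by
    rw [Complex.norm_real, Real.norm_eq_abs, abs_le]
    constructor <;>
      linarith [eulerMascheroniConstant_lt_two_thirds, one_half_lt_eulerMascheroniConstant]
  calc ‖zetaSqPolar s‖
      ≤ ‖(s - 1)⁻¹‖ ^ 2 + 2 * ‖(eulerMascheroniConstant : ℂ)‖ * ‖(s - 1)⁻¹‖ := by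
        refine (norm_add_le _ _).trans_eq ?_
        rw [norm_mul, norm_mul, norm_pow, Complex.norm_two]
    _ ≤ ‖(s - 1)⁻¹‖ ^ 2 + 2 * 1 * ‖(s - 1)⁻¹‖ := by gcongr
    _ = (‖(s - 1)⁻¹‖ + 2) * ‖(s - 1)⁻¹‖ := by ring

section Line

variable {l : ℂ} {c : ℝ} (hl : |l.im| < π / 2) (hc : 0 < c)
include hl hc

lemma integrable_gammaKernel_mul_zetaSqRegular :
    Integrable fun t : ℝ ↦ gammaKernel l (c + t * I) * zetaSqRegular (c + t * I) := by
  obtain ⟨K, hK⟩ := exists_norm_zetaSqRegular_le c hc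
  exact integrable_gammaKernel_mul 2 hc hl
    (differentiable_zetaSqRegular.continuous.comp (by fun_prop)) (hK c ⟨le_rfl, le_rfl⟩)

lemma integrable_gammaKernel_mul_zetaSqPolar (hc1 : c ≠ 1) :
    Integrable fun t : ℝ ↦ gammaKernel l (c + t * I) * zetaSqPolar (c + t * I) := by
  have hinv : Continuous fun t : ℝ ↦ (c + t * I - 1 : ℂ)⁻¹ :=
    Continuous.inv₀ (by fun_prop) fun t ↦ sub_ne_zero.2 (add_mul_I_ne_one hc1 t)
  have hbound (t : ℝ) : ‖(c + t * I - 1 : ℂ)⁻¹‖ ≤ |c - 1|⁻¹ := by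
    rw [norm_inv]
    refine inv_anti₀ (abs_pos.2 (sub_ne_zero.2 hc1)) ?_
    simpa using Complex.abs_re_le_norm (c + t * I - 1 : ℂ)
  refine integrable_gammaKernel_mul 0 (K := (|c - 1|⁻¹ + 2) * |c - 1|⁻¹) hc hl
    ((hinv.pow 2).add (hinv.const_mul _)) fun t ↦ ?_
  rw [pow_zero, mul_one]
  refine (norm_zetaSqPolar_le _).trans ?_
  gcongr <;> exact hbound t

lemma integrable_gammaKernel_mul_riemannZeta_sq (hc1 : c ≠ 1) :
    Integrable fun t : ℝ ↦ gammaKernel l (c + t * I) * riemannZeta (c + t * I) ^ 2 := by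
  simp only [riemannZeta_sq_eq (add_mul_I_ne_one hc1 _), mul_add]
  exact (integrable_gammaKernel_mul_zetaSqRegular hl hc).add
    (integrable_gammaKernel_mul_zetaSqPolar hl hc hc1)

lemma integral_gammaKernel_mul_riemannZeta_sq (hc1 : c ≠ 1) :
    ∫ t : ℝ, gammaKernel l (c + t * I) * riemannZeta (c + t * I) ^ 2
      = (∫ t : ℝ, gammaKernel l (c + t * I) * zetaSqRegular (c + t * I))
        + ∫ t : ℝ, gammaKernel l (c + t * I) * zetaSqPolar (c + t * I) := by
  rw [← integral_add (integrable_gammaKernel_mul_zetaSqRegular hl hc)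
    (integrable_gammaKernel_mul_zetaSqPolar hl hc hc1)]
  simp only [riemannZeta_sq_eq (add_mul_I_ne_one hc1 _), mul_add]

end Line

lemma differentiableOn_gammaKernel (l : ℂ) : DifferentiableOn ℂ (gammaKernel l) {s | 0 < s.re} := by
  refine fun s (hs : 0 < s.re) ↦ DifferentiableAt.differentiableWithinAt ?_
  refine (Complex.differentiableAt_Gamma s fun m hm ↦ ?_).mul (by fun_prop)
  have hre : s.re = -m := by simpa using congrArg Complex.re hm
  linarith [m.cast_nonneg (α := ℝ)]

lemma integral_gammaKernel_mul_zetaSqRegular_eq {l : ℂ} {a b : ℝ} (hl : |l.im| < π / 2)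
    (ha : 0 < a) (hab : a ≤ b) :
    ∫ t : ℝ, gammaKernel l (b + t * I) * zetaSqRegular (b + t * I)
      = ∫ t : ℝ, gammaKernel l (a + t * I) * zetaSqRegular (a + t * I) := by
  obtain ⟨C, ε, hε, hC⟩ := exists_one_add_abs_pow_mul_norm_gammaKernel_le 2 (b := b) ha hl
  obtain ⟨K, hK⟩ := exists_norm_zetaSqRegular_le b ha
  have hK0 : 0 ≤ K := by simpa using (norm_nonneg _).trans (hK a ⟨le_rfl, hab⟩ 0)
  have hlim : Tendsto (fun R ↦ K * (C * Real.exp (-(ε * R)))) atTop (𝓝 0) := by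
    have hexp := Real.tendsto_exp_neg_atTop_nhds_zero.comp (tendsto_id.const_mul_atTop hε)
    simpa using (hexp.const_mul C).const_mul K
  refine integral_vertical_line_eq (f := fun s ↦ gammaKernel l s * zetaSqRegular s) hab
    (((differentiableOn_gammaKernel l).mono fun s hs ↦ ha.trans_le hs.1).mul
      differentiable_zetaSqRegular.differentiableOn) hlim (fun c hc t ↦ ?_)
    (integrable_gammaKernel_mul_zetaSqRegular hl ha)
    (integrable_gammaKernel_mul_zetaSqRegular hl (ha.trans_le hab))
  calc ‖gammaKernel l (c + t * I) * zetaSqRegular (c + t * I)‖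
      ≤ ‖gammaKernel l (c + t * I)‖ * (K * (1 + |t|) ^ 2) := by
        rw [norm_mul]
        gcongr
        exact hK c hc t
    _ = K * ((1 + |t|) ^ 2 * ‖gammaKernel l (c + t * I)‖) := by ring
    _ ≤ K * (C * Real.exp (-(ε * |t|))) := mul_le_mul_of_nonneg_left (hC c hc t) hK0

/-! ### Moving the contour past the pole -/

lemma mul_le_sqrt_mul_sq_add_div_two {σ x y : ℝ} (hσ : 0 < σ) :
    x * y ≤ (√σ * x ^ 2 + (√σ)⁻¹ * y ^ 2) / 2 := by
  have : 0 < √σ := Real.sqrt_pos.2 hσ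
  rw [← sub_nonneg]
  have : (√σ * x ^ 2 + (√σ)⁻¹ * y ^ 2) / 2 - x * y = (√σ)⁻¹ * (√σ * x - y) ^ 2 / 2 := by
    field_simp
    ring
  rw [this]
  positivity

/-- Since `∫ e^{-2σ|t|} dt = 1 / σ`, this is the Cauchy–Schwarz inequality. -/
lemma norm_integral_le_of_norm_le_exp_mul {σ K : ℝ} {g : ℝ → ℂ} {r : ℝ → ℝ} (hσ : 0 < σ)
    (hK : 0 ≤ K) (hr : Integrable fun t ↦ r t ^ 2)
    (hg : ∀ t, ‖g t‖ ≤ K * (Real.exp (-(σ * |t|)) * r t)) :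
    ‖∫ t, g t‖ ≤ K * ((1 + ∫ t, r t ^ 2) / 2) * (√σ)⁻¹ := by
  have : 0 < √σ := Real.sqrt_pos.2 hσ
  have hexp : Integrable fun t : ℝ ↦ Real.exp (-(2 * σ * |t|)) :=
    integrable_exp_neg_mul_abs (by positivity)
  have hbound : Integrable fun t ↦
      K * ((√σ * Real.exp (-(2 * σ * |t|)) + (√σ)⁻¹ * r t ^ 2) / 2) :=
    (((hexp.const_mul _).add (hr.const_mul _)).div_const 2).const_mul K
  refine (norm_integral_le_of_norm_le hbound (.of_forall fun t ↦ ?_)).trans_eq ?_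
  · have hsq : Real.exp (-(2 * σ * |t|)) = Real.exp (-(σ * |t|)) ^ 2 := by
      rw [← Real.exp_nat_mul]
      push_cast
      ring_nf
    rw [hsq]
    exact (hg t).trans (mul_le_mul_of_nonneg_left (mul_le_sqrt_mul_sq_add_div_two hσ) hK)
  · rw [integral_const_mul, integral_div, integral_add (hexp.const_mul _) (hr.const_mul _),
      integral_const_mul, integral_const_mul, integral_exp_neg_mul_abs (by positivity)]
    have hsqrt : √σ * (2 / (2 * σ)) = (√σ)⁻¹ := by
      field_simp
      exact Real.sq_sqrt hσ.le
    rw [hsqrt]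
    ring

lemma norm_gammaKernel_half_le {l : ℂ} {σ : ℝ} (hre : 0 ≤ l.re) (him : l.im = π / 2 - σ)
    (hσ : σ ≤ 1) (t : ℝ) :
    ‖gammaKernel l (1 / 2 + t * I)‖ ≤ √(2 * π) * Real.exp (-(σ * |t|)) := by
  have hexp : ‖Complex.exp (-((1 / 2 + t * I) * l))‖ ≤ Real.exp ((π / 2 - σ) * |t|) := by
    have h := norm_exp_neg_line_mul (1 / 2) t l
    push_cast at h
    rw [h, ← Real.exp_add, him]
    have : 0 ≤ π / 2 - σ := by linarith [pi_gt_three]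
    refine Real.exp_le_exp.2 ?_
    nlinarith [le_abs_self t]
  calc ‖gammaKernel l (1 / 2 + t * I)‖
      ≤ √(2 * π) * Real.exp (-(π / 2 * |t|)) * Real.exp ((π / 2 - σ) * |t|) := by
        rw [gammaKernel, norm_mul]
        gcongr
        exact norm_Gamma_half_add_mul_I_le t
    _ = √(2 * π) * Real.exp (-(σ * |t|)) := by
        rw [mul_assoc, ← Real.exp_add]
        ring_nf

lemma norm_half_add_mul_I_sq (t : ℝ) : ‖(1 / 2 + t * I : ℂ)‖ ^ 2 = 1 / 4 + t ^ 2 := by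
  have h := Complex.norm_add_mul_I (1 / 2) t
  push_cast at h
  rw [h, Real.sq_sqrt (by positivity)]
  ring

lemma half_add_mul_I_ne_zero (t : ℝ) : (1 / 2 + t * I : ℂ) ≠ 0 := fun h ↦ by
  have := congrArg Complex.re h
  norm_num at this

lemma norm_half_add_mul_I_inv_le (t : ℝ) : ‖(1 / 2 + t * I : ℂ)⁻¹‖ ≤ 2 := by
  rw [norm_inv, inv_le_comm₀ (norm_pos_iff.2 (half_add_mul_I_ne_zero t)) two_pos]
  refine le_trans ?_ (Complex.abs_re_le_norm _)
  norm_num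

lemma integrable_norm_half_add_mul_I_inv_sq :
    Integrable fun t : ℝ ↦ ‖(1 / 2 + t * I : ℂ)⁻¹‖ ^ 2 := by
  refine (integrable_inv_one_add_sq.const_mul 4).mono' ?_ (.of_forall fun t ↦ ?_)
  · exact ((Continuous.inv₀ (by fun_prop) half_add_mul_I_ne_zero).norm.pow 2).aestronglyMeasurable
  · rw [Real.norm_of_nonneg (by positivity), norm_inv, inv_pow, norm_half_add_mul_I_sq,
      ← div_eq_mul_inv, inv_eq_one_div, div_le_div_iff₀ (by positivity) (by positivity)]
    nlinarith [sq_nonneg t]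

lemma norm_zetaSqPolar_half_le (t : ℝ) :
    ‖zetaSqPolar (1 / 2 + t * I)‖ ≤ 4 * ‖(1 / 2 + t * I : ℂ)⁻¹‖ := by
  have hconj : (1 / 2 + t * I - 1 : ℂ) = -(starRingEnd ℂ) (1 / 2 + t * I) := by
    apply Complex.ext <;> norm_num
  have hnorm : ‖(1 / 2 + t * I - 1 : ℂ)⁻¹‖ = ‖(1 / 2 + t * I : ℂ)⁻¹‖ := by
    rw [hconj, norm_inv, norm_neg, Complex.norm_conj, norm_inv]
  refine (norm_zetaSqPolar_le _).trans ?_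
  rw [hnorm]
  gcongr
  linarith [norm_half_add_mul_I_inv_le t]

/-- By `Γ(s + 1) = s Γ(s)`, the polar part on the line `Re s = 3/2` reduces to an integral on the
critical line and to a value of `∫ Γ(s) e^{-sl}`. -/
lemma gammaKernel_mul_zetaSqPolar_three_halves (l : ℂ) (t : ℝ) :
    gammaKernel l (3 / 2 + t * I) * zetaSqPolar (3 / 2 + t * I)
      = gammaKernel l (1 / 2 + t * I) * (Complex.exp (-l) * (1 / 2 + t * I)⁻¹)
        + gammaKernel l (1 / 2 + t * I) * (Complex.exp (-l) * (2 * eulerMascheroniConstant)) := by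
  have hw : (1 / 2 + t * I : ℂ) ≠ 0 := half_add_mul_I_ne_zero t
  rw [show (3 / 2 + t * I : ℂ) = (1 / 2 + t * I) + 1 by ring]
  generalize (1 / 2 + t * I : ℂ) = w at hw
  rw [gammaKernel, gammaKernel, zetaSqPolar, Complex.Gamma_add_one _ hw, add_sub_cancel_right,
    show -((w + 1) * l) = -(w * l) + -l by ring, Complex.exp_add]
  field_simp

lemma norm_exp_neg_le_one {l : ℂ} (hl : 0 ≤ l.re) : ‖Complex.exp (-l)‖ ≤ 1 := by
  rw [Complex.norm_exp, Complex.neg_re, Real.exp_le_one_iff]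
  linarith

lemma exists_norm_integral_gammaKernel_mul_le :
    ∃ C, ∀ (l : ℂ) (σ K : ℝ) (φ : ℝ → ℂ), 0 ≤ l.re → l.im = π / 2 - σ → 0 < σ → σ ≤ 1 → 0 ≤ K →
      (∀ t : ℝ, ‖φ t‖ ≤ K * ‖(1 / 2 + t * I : ℂ)⁻¹‖) →
      ‖∫ t : ℝ, gammaKernel l (1 / 2 + t * I) * φ t‖ ≤ C * K * (√σ)⁻¹ := by
  refine ⟨√(2 * π) * ((1 + ∫ t : ℝ, ‖(1 / 2 + t * I : ℂ)⁻¹‖ ^ 2) / 2),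
    fun l σ K φ hre him hσ hσ1 hK hφ ↦ ?_⟩
  refine (norm_integral_le_of_norm_le_exp_mul (K := √(2 * π) * K) hσ (by positivity)
    integrable_norm_half_add_mul_I_inv_sq fun t ↦ ?_).trans_eq (by ring)
  calc ‖gammaKernel l (1 / 2 + t * I) * φ t‖
      ≤ √(2 * π) * Real.exp (-(σ * |t|)) * (K * ‖(1 / 2 + t * I : ℂ)⁻¹‖) := by
        rw [norm_mul]
        gcongr
        · exact norm_gammaKernel_half_le hre him hσ1 t
        · exact hφ t
    _ = √(2 * π) * K * (Real.exp (-(σ * |t|)) * ‖(1 / 2 + t * I : ℂ)⁻¹‖) := by ring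

lemma abs_im_lt_of_eq_sub {l : ℂ} {σ : ℝ} (him : l.im = π / 2 - σ) (hσ : 0 < σ) (hσ1 : σ ≤ 1) :
    |l.im| < π / 2 := by
  rw [him, abs_lt]
  constructor <;> linarith [pi_gt_three]

lemma exists_norm_integral_gammaKernel_mul_zetaSqPolar_three_halves_le :
    ∃ C, ∀ (l : ℂ) (σ : ℝ), 0 ≤ l.re → l.im = π / 2 - σ → 0 < σ → σ ≤ 1 →
      ‖∫ t : ℝ, gammaKernel l (3 / 2 + t * I) * zetaSqPolar (3 / 2 + t * I)‖ ≤ C * (√σ)⁻¹ := by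
  obtain ⟨C, hC⟩ := exists_norm_integral_gammaKernel_mul_le
  refine ⟨C + 2 * π * (2 * ‖(eulerMascheroniConstant : ℂ)‖), fun l σ hre him hσ hσ1 ↦ ?_⟩
  have hl := abs_im_lt_of_eq_sub him hσ hσ1
  have hint := integrable_gammaKernel (c := 1 / 2) (by norm_num) hl
  have hval := integral_gammaKernel (c := 1 / 2) (by norm_num) hl
  have htotal := integrable_gammaKernel_mul_zetaSqPolar (c := 3 / 2) hl (by norm_num) (by norm_num)
  push_cast at hint hval htotal
  have hconst := hint.mul_const (Complex.exp (-l) * (2 * eulerMascheroniConstant))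
  simp only [gammaKernel_mul_zetaSqPolar_three_halves] at htotal ⊢
  have hpole := (htotal.sub hconst).congr (.of_forall fun t ↦ add_sub_cancel_right _ _)
  rw [integral_add hpole hconst, add_mul]
  refine (norm_add_le _ _).trans (add_le_add ?_ ?_)
  · refine (hC l σ 1 _ hre him hσ hσ1 zero_le_one fun t ↦ ?_).trans_eq (by rw [mul_one])
    rw [norm_mul]
    gcongr
    exact norm_exp_neg_le_one hre
  · have hexp : ‖Complex.exp (-Complex.exp l)‖ ≤ 1 := norm_exp_neg_le_one (re_exp_pos hl).le
    have hone : 1 ≤ (√σ)⁻¹ := (one_le_inv₀ (Real.sqrt_pos.2 hσ)).2 (Real.sqrt_le_one.2 hσ1)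
    rw [integral_mul_const, hval]
    calc ‖2 * π * Complex.exp (-Complex.exp l)
            * (Complex.exp (-l) * (2 * eulerMascheroniConstant))‖
        = 2 * π * ‖Complex.exp (-Complex.exp l)‖
            * (‖Complex.exp (-l)‖ * (2 * ‖(eulerMascheroniConstant : ℂ)‖)) := by
          simp only [norm_mul, Complex.norm_two, Complex.norm_real π,
            Real.norm_of_nonneg pi_pos.le]
      _ ≤ 2 * π * 1 * (1 * (2 * ‖(eulerMascheroniConstant : ℂ)‖)) := by
          gcongr
          exact norm_exp_neg_le_one hre
      _ ≤ 2 * π * (2 * ‖(eulerMascheroniConstant : ℂ)‖) * (√σ)⁻¹ := by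
          rw [mul_one, one_mul]
          exact le_mul_of_one_le_right (by positivity) hone

lemma exists_norm_integral_gammaKernel_mul_riemannZeta_sq_sub_le :
    ∃ C, ∀ (l : ℂ) (σ : ℝ), 0 ≤ l.re → l.im = π / 2 - σ → 0 < σ → σ ≤ 1 →
      ‖(∫ t : ℝ, gammaKernel l (3 / 2 + t * I) * riemannZeta (3 / 2 + t * I) ^ 2)
        - ∫ t : ℝ, gammaKernel l (1 / 2 + t * I) * riemannZeta (1 / 2 + t * I) ^ 2‖
      ≤ C * (√σ)⁻¹ := by
  obtain ⟨B, hB⟩ := exists_norm_integral_gammaKernel_mul_zetaSqPolar_three_halves_le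
  obtain ⟨C, hC⟩ := exists_norm_integral_gammaKernel_mul_le
  refine ⟨B + C * 4, fun l σ hre him hσ hσ1 ↦ ?_⟩
  have hl := abs_im_lt_of_eq_sub him hσ hσ1
  have hright := integral_gammaKernel_mul_riemannZeta_sq (c := 3 / 2) hl (by norm_num) (by norm_num)
  have hleft := integral_gammaKernel_mul_riemannZeta_sq (c := 1 / 2) hl (by norm_num) (by norm_num)
  have hregular := integral_gammaKernel_mul_zetaSqRegular_eq (a := 1 / 2) (b := 3 / 2) hl
    (by norm_num) (by norm_num)
  push_cast at hright hleft hregular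
  rw [hright, hleft, hregular, add_sub_add_left_eq_sub, add_mul]
  exact (norm_sub_le _ _).trans (add_le_add (hB l σ hre him hσ hσ1)
    (hC l σ 4 _ hre him hσ hσ1 zero_le_four norm_zetaSqPolar_half_le))

/-! ### Exponential series and Dirichlet series -/

lemma exp_neg_le_mul_rpow_neg {c u : ℝ} (hc : 0 < c) (hu : 0 < u) :
    Real.exp (-u) ≤ c ^ c * u ^ (-c) := by
  have hlin : u ≤ c * Real.exp (u / c) := by
    rw [← div_le_iff₀' hc]
    linarith [Real.add_one_le_exp (u / c)]
  have hpow : u ^ c ≤ c ^ c * Real.exp u := by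
    calc u ^ c ≤ (c * Real.exp (u / c)) ^ c := by gcongr
      _ = c ^ c * Real.exp u := by
        rw [Real.mul_rpow hc.le (Real.exp_pos _).le, ← Real.exp_mul, div_mul_cancel₀ _ hc.ne']
  rw [Real.exp_neg, Real.rpow_neg hu.le, ← div_eq_mul_inv, inv_eq_one_div,
    div_le_div_iff₀ (Real.exp_pos _) (by positivity), one_mul]
  exact hpow

lemma norm_exp_sub_exp_le {x y : ℂ} {r : ℝ} (hx : x.re ≤ r) (hy : y.re ≤ r) :
    ‖Complex.exp x - Complex.exp y‖ ≤ Real.exp r * ‖x - y‖ := by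
  refine Convex.norm_image_sub_le_of_norm_deriv_le (𝕜 := ℂ) (s := {z : ℂ | z.re ≤ r})
    (fun z _ ↦ Complex.differentiableAt_exp) (fun z hz ↦ ?_) (convex_halfSpace_re_le r) hy hx
  rw [Complex.deriv_exp, Complex.norm_exp]
  exact Real.exp_le_exp.2 hz

/-- The exponential series `∑ a(n) e^{-nx}`, dual to the Dirichlet series `∑ a(n) n^{-s}`. -/
noncomputable def expSeries (a : ℕ → ℂ) (x : ℂ) : ℂ := ∑' n, a n * Complex.exp (-(n * x))

lemma expSeries_sub_two_pi_mul_I (a : ℕ → ℂ) (x : ℂ) :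
    expSeries a (x - 2 * π * I) = expSeries a x := by
  refine tsum_congr fun n ↦ ?_
  rw [show -(n * (x - 2 * π * I)) = -(n * x) + n * (2 * π * I) by ring, Complex.exp_add,
    Complex.exp_nat_mul_two_pi_mul_I, mul_one]

section Coefficients

variable {a : ℕ → ℂ} (ha0 : a 0 = 0) {c : ℝ} (hc : 0 < c)
include ha0

lemma norm_term_ofReal (n : ℕ) : ‖LSeries.term a c n‖ = ‖a n‖ * (n : ℝ) ^ (-c) := by
  rcases eq_or_ne n 0 with rfl | hn
  · simp [ha0]
  · simp [hn, Real.rpow_neg, div_eq_mul_inv]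

lemma gammaKernel_mul_term (l s : ℂ) (n : ℕ) :
    gammaKernel l s * LSeries.term a s n = a n * gammaKernel (l + Real.log n) s := by
  rcases eq_or_ne n 0 with rfl | hn
  · simp [ha0]
  · rw [LSeries.term_def₀ ha0, Complex.cpow_def_of_ne_zero (by exact_mod_cast hn), gammaKernel,
      gammaKernel, mul_add, neg_add, Complex.exp_add, Complex.ofReal_log n.cast_nonneg,
      Complex.ofReal_natCast]
    ring_nf

include hc

lemma norm_coeff_mul_exp_neg_le {σ : ℝ} (hσ : 0 < σ) (n : ℕ) :
    ‖a n‖ * Real.exp (-(n * σ)) ≤ c ^ c * σ ^ (-c) * ‖LSeries.term a c n‖ := by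
  rw [norm_term_ofReal ha0]
  rcases eq_or_ne n 0 with rfl | hn
  · simp [ha0]
  · calc ‖a n‖ * Real.exp (-(n * σ)) ≤ ‖a n‖ * (c ^ c * (n * σ) ^ (-c)) := by
          gcongr
          exact exp_neg_le_mul_rpow_neg hc (by positivity)
      _ = c ^ c * σ ^ (-c) * (‖a n‖ * (n : ℝ) ^ (-c)) := by
          rw [Real.mul_rpow (by positivity) hσ.le]
          ring

lemma norm_coeff_mul_nat_mul_exp_neg_le {σ : ℝ} (hσ : 0 < σ) (n : ℕ) :
    ‖a n‖ * n * Real.exp (-(n * σ))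
      ≤ (c + 1) ^ (c + 1) * σ ^ (-(c + 1)) * ‖LSeries.term a c n‖ := by
  have h := norm_coeff_mul_exp_neg_le (a := fun n ↦ a n * n) (c := c + 1) (by simp) (by linarith)
    hσ n
  rw [norm_term_ofReal (by simp), norm_mul, RCLike.norm_natCast] at h
  refine h.trans_eq ?_
  rw [norm_term_ofReal ha0]
  rcases eq_or_ne n 0 with rfl | hn
  · simp [ha0]
  · rw [mul_assoc ‖a n‖, neg_add', Real.rpow_sub_one (x := n) (by positivity),
      mul_div_cancel₀ _ (by positivity)]

variable (ha : LSeriesSummable a c)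
include ha

lemma summable_coeff_mul_exp_neg {x : ℂ} (hx : 0 < x.re) :
    Summable fun n : ℕ ↦ a n * Complex.exp (-(n * x)) := by
  refine Summable.of_norm_bounded (ha.norm.mul_left (c ^ c * x.re ^ (-c))) fun n ↦ ?_
  rw [norm_mul, Complex.norm_exp]
  simpa using norm_coeff_mul_exp_neg_le ha0 hc hx n

lemma norm_expSeries_le {x : ℂ} {σ : ℝ} (hσ : 0 < σ) (hx : σ ≤ x.re) :
    ‖expSeries a x‖ ≤ c ^ c * σ ^ (-c) * ∑' n, ‖LSeries.term a c n‖ := by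
  refine tsum_of_norm_bounded (ha.norm.hasSum.mul_left _) fun n ↦ ?_
  refine le_trans ?_ (norm_coeff_mul_exp_neg_le ha0 hc hσ n)
  rw [norm_mul, Complex.norm_exp]
  gcongr
  simpa using mul_le_mul_of_nonneg_left hx n.cast_nonneg

lemma norm_expSeries_sub_le {x y : ℂ} {σ : ℝ} (hσ : 0 < σ) (hx : σ ≤ x.re) (hy : σ ≤ y.re) :
    ‖expSeries a x - expSeries a y‖
      ≤ (c + 1) ^ (c + 1) * σ ^ (-(c + 1)) * (∑' n, ‖LSeries.term a c n‖) * ‖x - y‖ := by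
  rw [expSeries, expSeries, ← (summable_coeff_mul_exp_neg ha0 hc ha (hσ.trans_le hx)).tsum_sub
    (summable_coeff_mul_exp_neg ha0 hc ha (hσ.trans_le hy))]
  refine tsum_of_norm_bounded ((ha.norm.hasSum.mul_left _).mul_right _) fun n ↦ ?_
  have hre {z : ℂ} (hz : σ ≤ z.re) : (-(n * z)).re ≤ -(n * σ) := by
    simpa using mul_le_mul_of_nonneg_left hz n.cast_nonneg
  calc ‖a n * Complex.exp (-(n * x)) - a n * Complex.exp (-(n * y))‖
      ≤ ‖a n‖ * (Real.exp (-(n * σ)) * ‖-(n * x) - -(n * y)‖) := by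
        rw [← mul_sub, norm_mul]
        gcongr
        exact norm_exp_sub_exp_le (hre hx) (hre hy)
    _ = ‖a n‖ * n * Real.exp (-(n * σ)) * ‖x - y‖ := by
        rw [neg_sub_neg, ← mul_sub, norm_mul, RCLike.norm_natCast, norm_sub_rev]
        ring
    _ ≤ (c + 1) ^ (c + 1) * σ ^ (-(c + 1)) * ‖LSeries.term a c n‖ * ‖x - y‖ := by
        exact mul_le_mul_of_nonneg_right (norm_coeff_mul_nat_mul_exp_neg_le ha0 hc hσ n)
          (norm_nonneg _)

lemma integral_gammaKernel_mul_LSeries {l : ℂ} (hl : |l.im| < π / 2) :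
    ∫ t : ℝ, gammaKernel l (c + t * I) * LSeries a (c + t * I)
      = 2 * π * expSeries a (Complex.exp l) := by
  have hl' (n : ℕ) : |(l + Real.log n).im| < π / 2 := by
    rwa [Complex.add_im, Complex.ofReal_im, add_zero]
  have hnorm (n : ℕ) (t : ℝ) : ‖gammaKernel l (c + t * I) * LSeries.term a (c + t * I) n‖
      = ‖gammaKernel l (c + t * I)‖ * ‖LSeries.term a c n‖ := by
    simp [LSeries.norm_term_eq]
  have hsum := hasSum_integral_of_summable_integral_norm (μ := volume)
    (F := fun n (t : ℝ) ↦ gammaKernel l (c + t * I) * LSeries.term a (c + t * I) n)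
    (fun n ↦ by
      simp_rw [gammaKernel_mul_term ha0]
      exact (integrable_gammaKernel hc (hl' n)).const_mul _)
    (by
      simp_rw [hnorm, integral_mul_const]
      exact ha.norm.mul_left _)
  simp_rw [tsum_mul_left] at hsum
  refine hsum.tsum_eq.symm.trans ?_
  rw [expSeries, ← tsum_mul_left]
  refine tsum_congr fun n ↦ ?_
  simp_rw [gammaKernel_mul_term ha0]
  rw [integral_const_mul, integral_gammaKernel hc (hl' n)]
  rcases eq_or_ne n 0 with rfl | hn
  · simp [ha0]
  · rw [Complex.exp_add, ← Complex.ofReal_exp, Real.exp_log (by positivity),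
      Complex.ofReal_natCast, mul_comm (Complex.exp l)]
    ring

end Coefficients

/-! ### The functional equation on the critical line -/

lemma half_add_mul_I_ne_one (t : ℝ) : (1 / 2 + t * I : ℂ) ≠ 1 := fun h ↦ by
  have := congrArg Complex.re h
  norm_num at this

lemma Z2_nonneg (t : ℝ) : 0 ≤ Z2 t := sq_nonneg _

lemma continuous_Z2 : Continuous Z2 := by
  refine (Continuous.norm (continuous_iff_continuousAt.2 fun t ↦ ?_)).pow 2
  exact ContinuousAt.comp (f := fun t : ℝ ↦ (1 / 2 + t * I : ℂ))
    (differentiableAt_riemannZeta (half_add_mul_I_ne_one t)).continuousAt (by fun_prop)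

lemma ofReal_Z2 (t : ℝ) :
    (Z2 t : ℂ) = riemannZeta (1 / 2 + t * I) * riemannZeta (1 - (1 / 2 + t * I)) := by
  have hconj : (1 - (1 / 2 + t * I) : ℂ) = (starRingEnd ℂ) (1 / 2 + t * I) := by
    apply Complex.ext <;> norm_num
  rw [hconj, riemannZeta_conj, Complex.mul_conj, Complex.normSq_eq_norm_sq, Z2]

lemma riemannZeta_one_sub_half_add_mul_I (t : ℝ) :
    riemannZeta (1 - (1 / 2 + t * I))
      = 2 * (2 * π) ^ (-(1 / 2 + t * I : ℂ)) * Complex.Gamma (1 / 2 + t * I)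
        * Complex.cos (π * (1 / 2 + t * I) / 2) * riemannZeta (1 / 2 + t * I) := by
  refine riemannZeta_one_sub (fun n h ↦ ?_) (half_add_mul_I_ne_one t)
  have hre := congrArg Complex.re h
  norm_num at hre
  linarith [n.cast_nonneg (α := ℝ)]

lemma two_cos_pi_mul_half_add_mul_I (t : ℝ) :
    Complex.exp (π * (1 / 2 + t * I) / 2 * I) * (2 * Complex.cos (π * (1 / 2 + t * I) / 2))
      = 1 + I * Real.exp (-(π * t)) := by
  have hsum : π * (1 / 2 + t * I) / 2 * I + π * (1 / 2 + t * I) / 2 * I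
      = π / 2 * I + ((-(π * t) : ℝ) : ℂ) := by
    push_cast
    linear_combination (π * t : ℂ) * Complex.I_mul_I
  rw [Complex.two_cos, mul_add, ← Complex.exp_add, ← Complex.exp_add, hsum, neg_mul,
    add_neg_cancel, Complex.exp_add, Complex.exp_pi_div_two_mul_I, Complex.exp_zero,
    Complex.ofReal_exp]
  ring

lemma one_le_norm_one_add_I_mul (u : ℝ) : 1 ≤ ‖(1 + I * u : ℂ)‖ := by
  simpa using Complex.abs_re_le_norm (1 + I * u : ℂ)

lemma one_add_I_mul_ne_zero (u : ℝ) : (1 + I * u : ℂ) ≠ 0 :=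
  norm_pos_iff.1 (one_pos.trans_le (one_le_norm_one_add_I_mul u))

/-- The parameter `l` for which `gammaKernel l * ζ ^ 2` on the critical line is essentially
`Z(t)² e^{-δt}`; the point `e^l` is then `2πi e^{-iδ}`. -/
noncomputable def criticalParam (δ : ℂ) : ℂ := Real.log (2 * π) + I * (π / 2 - δ)

lemma criticalParam_re (δ : ℂ) : (criticalParam δ).re = Real.log (2 * π) + δ.im := by
  simp [criticalParam]

lemma criticalParam_im (δ : ℂ) : (criticalParam δ).im = π / 2 - δ.re := by
  have : ((π / 2 : ℂ)).re = π / 2 := by exact_mod_cast Complex.ofReal_re (π / 2)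
  simp [criticalParam, this]

lemma exp_criticalParam (δ : ℂ) :
    Complex.exp (criticalParam δ) = 2 * π * I * Complex.exp (-(I * δ)) := by
  rw [criticalParam, mul_sub, Complex.exp_add, sub_eq_add_neg, Complex.exp_add,
    ← Complex.ofReal_exp, Real.exp_log (by positivity), mul_comm I (π / 2 : ℂ),
    Complex.exp_pi_div_two_mul_I]
  push_cast
  ring

lemma gammaKernel_criticalParam_mul_riemannZeta_sq (δ : ℂ) (t : ℝ) :
    gammaKernel (criticalParam δ) (1 / 2 + t * I) * riemannZeta (1 / 2 + t * I) ^ 2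
      = Complex.exp (I * δ / 2)
        * (Z2 t * Complex.exp (-(δ * t)) / (1 + I * Real.exp (-(π * t)))) := by
  have hpow : (2 * π : ℂ) ^ (-(1 / 2 + t * I : ℂ))
      = Complex.exp (-((1 / 2 + t * I) * Real.log (2 * π))) := by
    have : (2 * π : ℂ) ≠ 0 := by exact_mod_cast two_pi_pos.ne'
    rw [Complex.cpow_def_of_ne_zero this, Complex.ofReal_log two_pi_pos.le]
    push_cast
    ring_nf
  have hexp : Complex.exp (-((1 / 2 + t * I) * criticalParam δ))
        * Complex.exp (π * (1 / 2 + t * I) / 2 * I)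
      = Complex.exp (I * δ / 2) * Complex.exp (-(δ * t)) * (2 * π) ^ (-(1 / 2 + t * I : ℂ)) := by
    rw [hpow, ← Complex.exp_add, ← Complex.exp_add, ← Complex.exp_add, criticalParam]
    congr 1
    linear_combination (δ * t : ℂ) * Complex.I_mul_I
  rw [← mul_div_assoc, eq_div_iff (one_add_I_mul_ne_zero _), ← two_cos_pi_mul_half_add_mul_I,
    ofReal_Z2, riemannZeta_one_sub_half_add_mul_I, gammaKernel]
  linear_combination (Complex.Gamma (1 / 2 + t * I) * riemannZeta (1 / 2 + t * I) ^ 2 * 2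
    * Complex.cos (π * (1 / 2 + t * I) / 2)) * hexp

lemma integrable_Z2_mul_exp_div {δ : ℂ} (hδ : 0 < δ.re) (hδ1 : δ.re ≤ 1) :
    Integrable fun t : ℝ ↦
      Z2 t * Complex.exp (-(δ * t)) / (1 + I * Real.exp (-(π * t)) : ℂ) := by
  have hint := integrable_gammaKernel_mul_riemannZeta_sq (c := 1 / 2)
    (abs_im_lt_of_eq_sub (criticalParam_im δ) hδ hδ1) (by norm_num) (by norm_num)
  push_cast at hint
  refine (hint.const_mul (Complex.exp (-(I * δ / 2)))).congr (.of_forall fun t ↦ ?_)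
  simp only [gammaKernel_criticalParam_mul_riemannZeta_sq]
  rw [← mul_assoc, ← Complex.exp_add, neg_add_cancel, Complex.exp_zero, one_mul]

lemma norm_Z2_mul_exp (δ : ℂ) (t : ℝ) :
    ‖(Z2 t * Complex.exp (-(δ * t)) : ℂ)‖ = Z2 t * Real.exp (-(δ.re * t)) := by
  rw [norm_mul, Complex.norm_exp, Complex.norm_real, Real.norm_of_nonneg (Z2_nonneg t)]
  simp

lemma integrableOn_Z2_mul_exp {σ : ℝ} (hσ : 0 < σ) :
    IntegrableOn (fun t ↦ Z2 t * Real.exp (-(σ * t))) (Ioi 0) := by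
  have hint := (integrable_Z2_mul_exp_div (δ := (min σ 1 : ℝ)) (by simpa) (by simp)).norm
  refine ((hint.const_mul 2).integrableOn (s := Ioi 0)).mono' ?_ ?_
  · exact (continuous_Z2.mul (by fun_prop)).aestronglyMeasurable
  · refine ae_restrict_of_forall_mem measurableSet_Ioi fun t ht ↦ ?_
    have ht0 : 0 < t := ht
    have hden : ‖(1 + I * Real.exp (-(π * t)) : ℂ)‖ ≤ 2 := by
      refine (norm_add_le _ _).trans ?_
      rw [norm_one, norm_mul, Complex.norm_I, one_mul, Complex.norm_real,
        Real.norm_of_nonneg (Real.exp_pos _).le, ← one_add_one_eq_two]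
      gcongr
      exact Real.exp_le_one_iff.2 (by nlinarith [pi_pos])
    rw [norm_div, norm_Z2_mul_exp, Complex.ofReal_re, ← mul_div_assoc,
      le_div_iff₀ (one_pos.trans_le (one_le_norm_one_add_I_mul _)),
      Real.norm_of_nonneg (mul_nonneg (Z2_nonneg t) (Real.exp_pos _).le), mul_comm]
    gcongr
    · exact mul_nonneg (Z2_nonneg t) (Real.exp_pos _).le
    · exact Z2_nonneg t
    · exact min_le_left _ _

/-- The Laplace transform of `Z²`. -/
noncomputable def hardyLaplace (δ : ℂ) : ℂ := ∫ t in Ioi (0 : ℝ), Z2 t * Complex.exp (-(δ * t))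

lemma integrableOn_ofReal_mul_cexp {φ : ℝ → ℝ} {δ : ℂ}
    (hφ : IntegrableOn (fun x ↦ φ x * Real.exp (-(δ.re * x))) (Ioi 0)) :
    IntegrableOn (fun x : ℝ ↦ (φ x * Complex.exp (-(δ * x)) : ℂ)) (Ioi 0) := by
  refine (hφ.ofReal (𝕜 := ℂ).mul_bdd (c := 1) (g := fun x : ℝ ↦ Complex.exp ((-(δ.im * x) : ℝ) * I))
    (by fun_prop) (ae_of_all _ fun x ↦ (Complex.norm_exp_ofReal_mul_I _).le)).congr
    (ae_of_all _ fun x ↦ ?_)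
  simp only [RCLike.ofReal_mul, Complex.coe_algebraMap, Complex.ofReal_exp]
  rw [mul_assoc, ← Complex.exp_add]
  congr 2
  push_cast
  linear_combination (-x : ℂ) * Complex.re_add_im δ

/-- The factor `1 / (1 + i e^{-πt})` is within `O(e^{-πt})` of the indicator of `t > 0`, so the
value `δ = 1` provides a dominating function for all smaller `Re δ`. -/
lemma norm_Z2_mul_exp_div_sub_indicator_le {δ : ℂ} (hδ : 0 < δ.re) (hδ1 : δ.re ≤ 1) (t : ℝ) :
    ‖Z2 t * Complex.exp (-(δ * t)) / (1 + I * Real.exp (-(π * t)))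
        - indicator (Ioi 0) (fun t : ℝ ↦ (Z2 t * Complex.exp (-(δ * t)) : ℂ)) t‖
      ≤ ‖(Z2 t * Complex.exp (-(1 * t)) / (1 + I * Real.exp (-(π * t))) : ℂ)‖ := by
  have hZ := Z2_nonneg t
  rcases le_or_gt t 0 with ht | ht
  · rw [indicator_of_notMem (notMem_Ioi.2 ht), sub_zero, norm_div, norm_div, norm_Z2_mul_exp,
      norm_Z2_mul_exp]
    refine div_le_div_of_nonneg_right (mul_le_mul_of_nonneg_left (Real.exp_le_exp.2 ?_) hZ)
      (norm_nonneg _)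
    exact neg_le_neg (mul_le_mul_of_nonpos_right hδ1 ht)
  · have hden := one_add_I_mul_ne_zero (Real.exp (-(π * t)))
    have hsub : (Z2 t * Complex.exp (-(δ * t)) / (1 + I * Real.exp (-(π * t)))
          - Z2 t * Complex.exp (-(δ * t)) : ℂ)
        = -(I * (Z2 t * Complex.exp (-(δ * t)) * Real.exp (-(π * t))))
          / (1 + I * Real.exp (-(π * t))) := by
      field_simp
      ring
    rw [indicator_of_mem (mem_Ioi.2 ht), hsub, norm_div, norm_div, norm_neg, norm_mul,
      Complex.norm_I, one_mul, norm_mul, norm_Z2_mul_exp, norm_Z2_mul_exp, Complex.norm_real,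
      Real.norm_of_nonneg (Real.exp_pos _).le, mul_assoc, ← Real.exp_add]
    gcongr
    rw [Complex.one_re]
    nlinarith [pi_gt_three, mul_pos hδ ht]

lemma exists_norm_integral_gammaKernel_half_sub_hardyLaplace_le :
    ∃ C, ∀ δ : ℂ, 0 < δ.re → δ.re ≤ 1 →
      ‖Complex.exp (-(I * δ / 2)) * (∫ t : ℝ, gammaKernel (criticalParam δ) (1 / 2 + t * I)
        * riemannZeta (1 / 2 + t * I) ^ 2) - hardyLaplace δ‖ ≤ C := by
  refine ⟨∫ t : ℝ, ‖(Z2 t * Complex.exp (-(1 * t)) / (1 + I * Real.exp (-(π * t))) : ℂ)‖,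
    fun δ hδ hδ1 ↦ ?_⟩
  simp_rw [gammaKernel_criticalParam_mul_riemannZeta_sq]
  rw [integral_const_mul, ← mul_assoc, ← Complex.exp_add, neg_add_cancel, Complex.exp_zero,
    one_mul, hardyLaplace, ← integral_indicator measurableSet_Ioi,
    ← integral_sub (integrable_Z2_mul_exp_div hδ hδ1)
      ((integrable_indicator_iff measurableSet_Ioi).2
        (integrableOn_ofReal_mul_cexp (integrableOn_Z2_mul_exp hδ)))]
  exact norm_integral_le_of_norm_le (integrable_Z2_mul_exp_div (by simp) (by simp)).norm
    (.of_forall (norm_Z2_mul_exp_div_sub_indicator_le hδ hδ1))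

/-! ### Comparison of the two Laplace transforms -/

/-- The divisor function as a complex sequence: the coefficients of the Dirichlet series `ζ²`. -/
noncomputable def zetaSqCoeff (n : ℕ) : ℂ := n.divisors.card

lemma zetaSqCoeff_zero : zetaSqCoeff 0 = 0 := by simp [zetaSqCoeff]

lemma zetaSqCoeff_eq_zeta_mul_zeta :
    zetaSqCoeff = ((ArithmeticFunction.zeta : ArithmeticFunction ℂ)
      * (ArithmeticFunction.zeta : ArithmeticFunction ℂ) : ArithmeticFunction ℂ) := by
  funext n
  rw [← ArithmeticFunction.natCoe_mul, ArithmeticFunction.natCoe_apply, zetaSqCoeff,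
    ← ArithmeticFunction.sigma_zero_apply, ← ArithmeticFunction.zeta_mul_pow_eq_sigma,
    ArithmeticFunction.pow_zero_eq_zeta]

lemma LSeriesSummable_natCoe_zeta {s : ℂ} (hs : 1 < s.re) :
    LSeriesSummable (ArithmeticFunction.zeta : ArithmeticFunction ℂ) s :=
  ArithmeticFunction.LSeriesSummable_zeta_iff.2 hs

lemma LSeriesSummable_zetaSqCoeff {s : ℂ} (hs : 1 < s.re) : LSeriesSummable zetaSqCoeff s := by
  rw [zetaSqCoeff_eq_zeta_mul_zeta]
  exact ArithmeticFunction.LSeriesSummable_mul (LSeriesSummable_natCoe_zeta hs)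
    (LSeriesSummable_natCoe_zeta hs)

lemma LSeries_zetaSqCoeff {s : ℂ} (hs : 1 < s.re) : LSeries zetaSqCoeff s = riemannZeta s ^ 2 := by
  rw [zetaSqCoeff_eq_zeta_mul_zeta, ArithmeticFunction.LSeries_mul' (LSeriesSummable_natCoe_zeta hs)
    (LSeriesSummable_natCoe_zeta hs), sq, ← ArithmeticFunction.LSeries_zeta_eq_riemannZeta hs]
  simp

lemma exists_norm_expSeries_zetaSqCoeff_le :
    ∃ C, 0 ≤ C ∧ ∀ (x : ℂ) (σ : ℝ), 0 < σ → σ ≤ x.re →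
      ‖expSeries zetaSqCoeff x‖ ≤ C * σ ^ (-(3 / 2) : ℝ) := by
  refine ⟨(3 / 2 : ℝ) ^ (3 / 2 : ℝ) * ∑' n, ‖LSeries.term zetaSqCoeff (3 / 2 : ℝ) n‖,
    by positivity, fun x σ hσ hx ↦ ?_⟩
  refine (norm_expSeries_le zetaSqCoeff_zero (c := 3 / 2) (by norm_num)
    (LSeriesSummable_zetaSqCoeff (by norm_num)) hσ hx).trans_eq (by ring)

lemma exists_norm_expSeries_zetaSqCoeff_sub_le :
    ∃ C, 0 ≤ C ∧ ∀ (x y : ℂ) (σ : ℝ), 0 < σ → σ ≤ x.re → σ ≤ y.re →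
      ‖expSeries zetaSqCoeff x - expSeries zetaSqCoeff y‖ ≤ C * σ ^ (-(5 / 2) : ℝ) * ‖x - y‖ := by
  refine ⟨(5 / 2 : ℝ) ^ (5 / 2 : ℝ) * ∑' n, ‖LSeries.term zetaSqCoeff (3 / 2 : ℝ) n‖,
    by positivity, fun x y σ hσ hx hy ↦ ?_⟩
  refine (norm_expSeries_sub_le zetaSqCoeff_zero (c := 3 / 2) (by norm_num)
    (LSeriesSummable_zetaSqCoeff (by norm_num)) hσ hx hy).trans_eq ?_
  rw [show (3 / 2 : ℝ) + 1 = 5 / 2 by norm_num]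
  ring

lemma integral_gammaKernel_mul_riemannZeta_sq_three_halves {l : ℂ} (hl : |l.im| < π / 2) :
    ∫ t : ℝ, gammaKernel l (3 / 2 + t * I) * riemannZeta (3 / 2 + t * I) ^ 2
      = 2 * π * expSeries zetaSqCoeff (Complex.exp l) := by
  have h := integral_gammaKernel_mul_LSeries zetaSqCoeff_zero (c := 3 / 2) (by norm_num)
    (LSeriesSummable_zetaSqCoeff (by norm_num)) hl
  push_cast at h
  rw [← h]
  congr 1
  funext t
  rw [LSeries_zetaSqCoeff (by norm_num)]

lemma criticalParam_re_nonneg {δ : ℂ} (hδ : ‖δ‖ ≤ 1) : 0 ≤ (criticalParam δ).re := by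
  have hlog : 1 ≤ Real.log (2 * π) := by
    rw [Real.le_log_iff_exp_le two_pi_pos]
    linarith [Real.exp_one_lt_d9, pi_gt_three]
  rw [criticalParam_re]
  linarith [(abs_le.1 ((Complex.abs_im_le_norm δ).trans hδ)).1]

lemma re_le_re_exp_criticalParam {δ : ℂ} (hδ : 0 < δ.re) (hδ1 : ‖δ‖ ≤ 1) :
    δ.re ≤ (Complex.exp (criticalParam δ)).re := by
  have hsin : 2 / π * δ.re ≤ Real.sin δ.re :=
    Real.mul_le_sin hδ.le (by linarith [pi_gt_three, (Complex.re_le_norm δ).trans hδ1])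
  have hexp : 1 ≤ 4 * Real.exp δ.im := by
    have h4 : Real.exp 1 ≤ 4 := by linarith [Real.exp_one_lt_d9]
    calc (1 : ℝ) = Real.exp 1 * Real.exp (-1) := by rw [← Real.exp_add]; simp
      _ ≤ 4 * Real.exp δ.im := by
        gcongr
        exact (abs_le.1 ((Complex.abs_im_le_norm δ).trans hδ1)).1
  rw [Complex.exp_re, criticalParam_re, criticalParam_im, Real.cos_pi_div_two_sub, Real.exp_add,
    Real.exp_log two_pi_pos]
  calc δ.re ≤ 4 * Real.exp δ.im * δ.re := le_mul_of_one_le_left hδ.le hexp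
    _ = 2 * π * Real.exp δ.im * (2 / π * δ.re) := by field_simp; norm_num
    _ ≤ 2 * π * Real.exp δ.im * Real.sin δ.re := by gcongr

lemma norm_exp_criticalParam_sub_le {δ : ℂ} (hδ : ‖δ‖ ≤ 1) :
    ‖Complex.exp (criticalParam δ) - 2 * π * I - 2 * π * δ‖ ≤ 2 * π * ‖δ‖ ^ 2 := by
  have hIδ : ‖-(I * δ)‖ = ‖δ‖ := by simp
  have hexp := Complex.norm_exp_sub_one_sub_id_le (hIδ.trans_le hδ)
  have hfactor : Complex.exp (criticalParam δ) - 2 * π * I - 2 * π * δ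
      = (2 * π : ℝ) * I * (Complex.exp (-(I * δ)) - 1 - -(I * δ)) := by
    rw [exp_criticalParam]
    push_cast
    linear_combination (-2 * π * δ) * Complex.I_mul_I
  rw [hIδ] at hexp
  rw [hfactor, norm_mul, norm_mul, Complex.norm_I, mul_one, Complex.norm_real,
    Real.norm_of_nonneg two_pi_pos.le]
  gcongr

lemma norm_two_pi_mul (z : ℂ) : ‖2 * π * z‖ = 2 * π * ‖z‖ := by
  rw [norm_mul, norm_mul, Complex.norm_two, Complex.norm_real, Real.norm_of_nonneg pi_pos.le]

lemma re_le_re_two_pi_mul {δ : ℂ} (hδ : 0 < δ.re) : δ.re ≤ (2 * π * δ : ℂ).re := by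
  rw [show (2 * π * δ : ℂ) = ((2 * π : ℝ) : ℂ) * δ by push_cast; rfl, Complex.re_ofReal_mul]
  nlinarith [pi_gt_three]

lemma inv_sqrt_re_le {δ : ℂ} (hδ : 0 < δ.re) :
    (√δ.re)⁻¹ ≤ ‖δ‖ ^ 2 * δ.re ^ (-(5 / 2) : ℝ) := by
  calc (√δ.re)⁻¹ = δ.re ^ 2 * δ.re ^ (-(5 / 2) : ℝ) := by
        rw [Real.sqrt_eq_rpow, ← Real.rpow_neg hδ.le, ← Real.rpow_natCast, ← Real.rpow_add hδ]
        norm_num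
    _ ≤ ‖δ‖ ^ 2 * δ.re ^ (-(5 / 2) : ℝ) := by
        gcongr
        exact Complex.re_le_norm δ

lemma norm_mul_re_rpow_le {δ : ℂ} (hδ : 0 < δ.re) :
    ‖δ‖ * δ.re ^ (-(3 / 2) : ℝ) ≤ ‖δ‖ ^ 2 * δ.re ^ (-(5 / 2) : ℝ) := by
  calc ‖δ‖ * δ.re ^ (-(3 / 2) : ℝ) = ‖δ‖ * (δ.re * δ.re ^ (-(5 / 2) : ℝ)) := by
        rw [← Real.rpow_one_add' hδ.le (by norm_num)]
        norm_num
    _ ≤ ‖δ‖ * (‖δ‖ * δ.re ^ (-(5 / 2) : ℝ)) := by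
        gcongr
        exact Complex.re_le_norm δ
    _ = ‖δ‖ ^ 2 * δ.re ^ (-(5 / 2) : ℝ) := by ring

lemma exists_norm_expSeries_criticalParam_sub_le :
    ∃ C, 0 ≤ C ∧ ∀ δ : ℂ, 0 < δ.re → ‖δ‖ ≤ 1 →
      ‖expSeries zetaSqCoeff (Complex.exp (criticalParam δ)) - expSeries zetaSqCoeff (2 * π * δ)‖
        ≤ C * (‖δ‖ ^ 2 * δ.re ^ (-(5 / 2) : ℝ)) := by
  obtain ⟨C, hC0, hC⟩ := exists_norm_expSeries_zetaSqCoeff_sub_le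
  refine ⟨C * (2 * π), by positivity, fun δ hδ hδ1 ↦ ?_⟩
  rw [← expSeries_sub_two_pi_mul_I]
  calc _ ≤ C * δ.re ^ (-(5 / 2) : ℝ)
          * ‖Complex.exp (criticalParam δ) - 2 * π * I - 2 * π * δ‖ :=
        hC _ _ _ hδ (by simpa using re_le_re_exp_criticalParam hδ hδ1) (re_le_re_two_pi_mul hδ)
    _ ≤ C * δ.re ^ (-(5 / 2) : ℝ) * (2 * π * ‖δ‖ ^ 2) := by
        gcongr
        exact norm_exp_criticalParam_sub_le hδ1
    _ = C * (2 * π) * (‖δ‖ ^ 2 * δ.re ^ (-(5 / 2) : ℝ)) := by ring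

lemma norm_exp_neg_I_mul_div_two_sub_one_le {δ : ℂ} (hδ : ‖δ‖ ≤ 1) :
    ‖Complex.exp (-(I * δ / 2)) - 1‖ ≤ ‖δ‖ := by
  have hhalf : ‖-(I * δ / 2)‖ = ‖δ‖ / 2 := by simp
  refine (Complex.norm_exp_sub_one_le (by linarith)).trans_eq ?_
  rw [hhalf, mul_div_cancel₀ _ two_ne_zero]

lemma exists_norm_hardyLaplace_sub_expSeries_criticalParam_le :
    ∃ C, 0 ≤ C ∧ ∀ δ : ℂ, 0 < δ.re → ‖δ‖ ≤ 1 →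
      ‖hardyLaplace δ - 2 * π * expSeries zetaSqCoeff (Complex.exp (criticalParam δ))‖
        ≤ C * (‖δ‖ ^ 2 * δ.re ^ (-(5 / 2) : ℝ)) := by
  obtain ⟨B, hB⟩ := exists_norm_integral_gammaKernel_half_sub_hardyLaplace_le
  obtain ⟨K, hK⟩ := exists_norm_integral_gammaKernel_mul_riemannZeta_sq_sub_le
  obtain ⟨W, hW0, hW⟩ := exists_norm_expSeries_zetaSqCoeff_le
  refine ⟨|B| + 2 * |K| + 2 * π * W, by positivity, fun δ hδ hδ1 ↦ ?_⟩
  have hσ1 : δ.re ≤ 1 := (Complex.re_le_norm δ).trans hδ1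
  have hcrit := hB δ hδ hσ1
  have hshift := hK _ _ (criticalParam_re_nonneg hδ1) (criticalParam_im δ) hδ hσ1
  have hseries := hW _ _ hδ (re_le_re_exp_criticalParam hδ hδ1)
  have hsmall := norm_exp_neg_I_mul_div_two_sub_one_le hδ1
  rw [integral_gammaKernel_mul_riemannZeta_sq_three_halves
    (abs_im_lt_of_eq_sub (criticalParam_im δ) hδ hσ1)] at hshift
  set e := Complex.exp (-(I * δ / 2))
  set E := ∫ t : ℝ, gammaKernel (criticalParam δ) (1 / 2 + t * I) * riemannZeta (1 / 2 + t * I) ^ 2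
  set S := expSeries zetaSqCoeff (Complex.exp (criticalParam δ))
  set D := ‖δ‖ ^ 2 * δ.re ^ (-(5 / 2) : ℝ)
  have hD : (√δ.re)⁻¹ ≤ D := inv_sqrt_re_le hδ
  have hD1 : 1 ≤ D :=
    ((one_le_inv₀ (Real.sqrt_pos.2 hδ)).2 (Real.sqrt_le_one.2 hσ1)).trans hD
  have he : ‖e‖ ≤ 2 := by
    have := norm_add_le (e - 1) 1
    rw [sub_add_cancel, norm_one] at this
    linarith
  have hdecomp : hardyLaplace δ - 2 * π * S = -(e * E - hardyLaplace δ)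
      + -(e * (2 * π * S - E)) + (e - 1) * (2 * π * S) := by ring
  rw [hdecomp]
  refine norm_add₃_le.trans ?_
  simp only [norm_neg, norm_two_pi_mul, norm_mul e, norm_mul (e - 1)]
  rw [add_mul, add_mul]
  refine add_le_add (add_le_add ?_ ?_) ?_
  · exact hcrit.trans ((le_abs_self B).trans (le_mul_of_one_le_right (abs_nonneg B) hD1))
  · calc ‖e‖ * ‖2 * π * S - E‖ ≤ 2 * (|K| * D) := by
          gcongr
          exact hshift.trans (by gcongr; exact le_abs_self K)
      _ = 2 * |K| * D := by ring
  · calc ‖e - 1‖ * (2 * π * ‖S‖) ≤ ‖δ‖ * (2 * π * (W * δ.re ^ (-(3 / 2) : ℝ))) := by gcongr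
      _ = 2 * π * W * (‖δ‖ * δ.re ^ (-(3 / 2) : ℝ)) := by ring
      _ ≤ 2 * π * W * D := mul_le_mul_of_nonneg_left (norm_mul_re_rpow_le hδ) (by positivity)

lemma exists_norm_hardyLaplace_sub_expSeries_le_of_norm_le_one :
    ∃ C, 0 ≤ C ∧ ∀ δ : ℂ, 0 < δ.re → ‖δ‖ ≤ 1 →
      ‖hardyLaplace δ - 2 * π * expSeries zetaSqCoeff (2 * π * δ)‖
        ≤ C * (‖δ‖ ^ 2 * δ.re ^ (-(5 / 2) : ℝ)) := by
  obtain ⟨C, hC0, hC⟩ := exists_norm_hardyLaplace_sub_expSeries_criticalParam_le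
  obtain ⟨V, hV0, hV⟩ := exists_norm_expSeries_criticalParam_sub_le
  refine ⟨C + 2 * π * V, by positivity, fun δ hδ hδ1 ↦ ?_⟩
  refine (norm_sub_le_norm_sub_add_norm_sub _
    (2 * π * expSeries zetaSqCoeff (Complex.exp (criticalParam δ))) _).trans ?_
  rw [← mul_sub, norm_two_pi_mul, add_mul, mul_assoc (2 * π)]
  gcongr
  exacts [hC δ hδ hδ1, hV δ hδ hδ1]

lemma hardyLaplace_ofReal (σ : ℝ) :
    hardyLaplace σ = ((∫ t in Ioi (0 : ℝ), Z2 t * Real.exp (-(σ * t)) : ℝ) : ℂ) := by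
  rw [hardyLaplace, ← integral_complex_ofReal]
  push_cast
  rfl

lemma norm_hardyLaplace_le (δ : ℂ) : ‖hardyLaplace δ‖ ≤ ‖hardyLaplace δ.re‖ := by
  calc ‖hardyLaplace δ‖ ≤ ∫ t in Ioi (0 : ℝ), ‖Z2 t * Complex.exp (-(δ * t))‖ :=
        norm_integral_le_integral_norm _
    _ = ∫ t in Ioi (0 : ℝ), Z2 t * Real.exp (-(δ.re * t)) := by simp only [norm_Z2_mul_exp]
    _ ≤ ‖hardyLaplace δ.re‖ := by
        rw [hardyLaplace_ofReal, Complex.norm_real]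
        exact Real.le_norm_self _

lemma exists_norm_hardyLaplace_le :
    ∃ C, 0 ≤ C ∧ ∀ δ : ℂ, 0 < δ.re → δ.re ≤ 1 → ‖hardyLaplace δ‖ ≤ C * δ.re ^ (-(3 / 2) : ℝ) := by
  obtain ⟨K, hK0, hK⟩ := exists_norm_hardyLaplace_sub_expSeries_le_of_norm_le_one
  obtain ⟨W, hW0, hW⟩ := exists_norm_expSeries_zetaSqCoeff_le
  refine ⟨K + 2 * π * W, by positivity, fun δ hδ hδ1 ↦ (norm_hardyLaplace_le δ).trans ?_⟩
  have hnorm : ‖(δ.re : ℂ)‖ = δ.re := by rw [Complex.norm_real, Real.norm_of_nonneg hδ.le]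
  have hpow : δ.re ^ 2 * δ.re ^ (-(5 / 2) : ℝ) ≤ δ.re ^ (-(3 / 2) : ℝ) := by
    rw [← Real.rpow_natCast, ← Real.rpow_add hδ]
    exact Real.rpow_le_rpow_of_exponent_ge hδ hδ1 (by norm_num)
  have hdiff := hK δ.re (by simpa using hδ) (hnorm.trans_le hδ1)
  have hseries := hW (2 * π * (δ.re : ℂ)) δ.re hδ
    (by simpa using re_le_re_two_pi_mul (δ := δ.re) hδ)
  rw [hnorm, Complex.ofReal_re] at hdiff
  calc ‖hardyLaplace δ.re‖
      ≤ ‖2 * π * expSeries zetaSqCoeff (2 * π * δ.re)‖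
        + ‖hardyLaplace δ.re - 2 * π * expSeries zetaSqCoeff (2 * π * δ.re)‖ :=
        norm_le_norm_add_norm_sub' _ _
    _ ≤ 2 * π * (W * δ.re ^ (-(3 / 2) : ℝ)) + K * δ.re ^ (-(3 / 2) : ℝ) := by
        rw [norm_two_pi_mul]
        gcongr
        exact hdiff.trans (by gcongr)
    _ = (K + 2 * π * W) * δ.re ^ (-(3 / 2) : ℝ) := by ring

theorem exists_norm_hardyLaplace_sub_expSeries_le :
    ∃ C, ∀ δ : ℂ, 0 < δ.re → δ.re ≤ 1 →
      ‖hardyLaplace δ - 2 * π * expSeries zetaSqCoeff (2 * π * δ)‖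
        ≤ C * (‖δ‖ ^ 2 * δ.re ^ (-(5 / 2) : ℝ)) := by
  obtain ⟨K, hK0, hK⟩ := exists_norm_hardyLaplace_sub_expSeries_le_of_norm_le_one
  obtain ⟨L, -, hL⟩ := exists_norm_hardyLaplace_le
  obtain ⟨W, -, hW⟩ := exists_norm_expSeries_zetaSqCoeff_le
  refine ⟨max K (L + 2 * π * W), fun δ hδ hδ1 ↦ ?_⟩
  rcases le_total ‖δ‖ 1 with hsmall | hlarge
  · exact (hK δ hδ hsmall).trans (by gcongr; exact le_max_left _ _)
  · calc ‖hardyLaplace δ - 2 * π * expSeries zetaSqCoeff (2 * π * δ)‖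
        ≤ ‖hardyLaplace δ‖ + ‖2 * π * expSeries zetaSqCoeff (2 * π * δ)‖ := norm_sub_le _ _
      _ ≤ L * δ.re ^ (-(3 / 2) : ℝ) + 2 * π * (W * δ.re ^ (-(3 / 2) : ℝ)) := by
        rw [norm_two_pi_mul]
        gcongr
        exacts [hL δ hδ hδ1, hW _ _ hδ (re_le_re_two_pi_mul hδ)]
      _ = (L + 2 * π * W) * (1 * δ.re ^ (-(3 / 2) : ℝ)) := by ring
      _ ≤ max K (L + 2 * π * W) * (‖δ‖ * δ.re ^ (-(3 / 2) : ℝ)) := by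
        gcongr
        exact le_max_right _ _
      _ ≤ max K (L + 2 * π * W) * (‖δ‖ ^ 2 * δ.re ^ (-(5 / 2) : ℝ)) := by
        gcongr ?_ * ?_
        · exact norm_mul_re_rpow_le hδ

/-! ### A Tauberian theorem with remainder -/

section Tauberian

open scoped FourierTransform SchwartzMap

lemma integral_mul_schwartzMap_comp {α : Type*} [MeasurableSpace α] {m : Measure α} [SFinite m]
    (g : 𝓢(ℝ, ℂ)) {ψ : α → ℂ} (hψ : Integrable ψ m) {u : α → ℝ} (hu : Measurable u) :
    ∫ a, ψ a * g (u a) ∂m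
      = ∫ ξ, 𝓕 g ξ * ∫ a, ψ a * Complex.exp ((2 * π * ξ * u a : ℝ) * I) ∂m := by
  have hinv (v : ℝ) : g v = ∫ ξ, 𝓕 g ξ * Complex.exp ((2 * π * ξ * v : ℝ) * I) := by
    have hg : 𝓕⁻ (𝓕 g) = g := FourierTransform.fourierInv_fourier_eq g
    conv_lhs => rw [← hg]
    rw [SchwartzMap.fourierInv_coe, Real.fourierInv_eq']
    refine integral_congr_ae (ae_of_all _ fun ξ ↦ ?_)
    simp only [smul_eq_mul, RCLike.inner_apply, conj_trivial]
    rw [mul_comm]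
    congr 4
    ring
  have hprod : Integrable (fun z : α × ℝ ↦ Complex.exp ((2 * π * z.2 * u z.1 : ℝ) * I)
      * (ψ z.1 * 𝓕 g z.2)) (m.prod volume) :=
    (hψ.mul_prod (𝓕 g).integrable).bdd_mul (c := 1) (by fun_prop)
      (ae_of_all _ fun z ↦ by rw [Complex.norm_exp_ofReal_mul_I])
  calc ∫ a, ψ a * g (u a) ∂m
      = ∫ a, ∫ ξ, Complex.exp ((2 * π * ξ * u a : ℝ) * I) * (ψ a * 𝓕 g ξ) ∂volume ∂m := by
        refine integral_congr_ae (ae_of_all _ fun a ↦ ?_)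
        simp only [hinv (u a), ← integral_const_mul]
        exact integral_congr_ae (ae_of_all _ fun ξ ↦ by ring)
    _ = ∫ ξ, ∫ a, Complex.exp ((2 * π * ξ * u a : ℝ) * I) * (ψ a * 𝓕 g ξ) ∂m :=
        integral_integral_swap hprod
    _ = ∫ ξ, 𝓕 g ξ * ∫ a, ψ a * Complex.exp ((2 * π * ξ * u a : ℝ) * I) ∂m := by
        simp only [← integral_const_mul]
        exact integral_congr_ae (ae_of_all _ fun ξ ↦ integral_congr_ae
          (ae_of_all _ fun a ↦ by ring))

lemma integrable_one_add_mul_norm_fourier (g : 𝓢(ℝ, ℂ)) (c : ℝ) :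
    Integrable fun ξ ↦ (1 + c * |ξ|) * ‖𝓕 g ξ‖ := by
  refine ((𝓕 g).integrable.norm.add
    (((𝓕 g).integrable_pow_mul volume 1).const_mul c)).congr (ae_of_all _ fun ξ ↦ ?_)
  simp only [Pi.add_apply, pow_one, Real.norm_eq_abs]
  ring

variable {φ : ℝ → ℝ} {C σ T H : ℝ}

/-- Fourier inversion writes the weight through the Laplace transform of `φ` on a vertical line. -/
lemma norm_integral_mul_exp_mul_schwartzMap_le (g : 𝓢(ℝ, ℂ)) (hH : 0 < H) (hσH : |σ| ≤ H⁻¹)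
    (hC : 0 ≤ C) (hφ : IntegrableOn (fun x ↦ φ x * Real.exp (-(σ * x))) (Ioi 0))
    (hφC : ∀ δ : ℂ, δ.re = σ →
      ‖∫ x in Ioi (0 : ℝ), φ x * Complex.exp (-(δ * x))‖ ≤ C * ‖δ‖) :
    ‖∫ x in Ioi (0 : ℝ), φ x * Complex.exp (-(σ * x)) * g ((x - T) / H)‖
      ≤ C * (∫ ξ, (1 + 2 * π * |ξ|) * ‖𝓕 g ξ‖) / H := by
  have hslice (ξ : ℝ) : ‖∫ x in Ioi (0 : ℝ), φ x * Complex.exp (-(σ * x))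
      * Complex.exp ((2 * π * ξ * ((x - T) / H) : ℝ) * I)‖ ≤ C * ((1 + 2 * π * |ξ|) * H⁻¹) := by
    set δ : ℂ := σ - (2 * π * ξ / H : ℝ) * I with hδ
    have hnorm : ‖δ‖ ≤ (1 + 2 * π * |ξ|) * H⁻¹ := by
      calc ‖δ‖ ≤ ‖(σ : ℂ)‖ + ‖(2 * π * ξ / H : ℝ) * I‖ := norm_sub_le _ _
        _ = |σ| + 2 * π * |ξ| * H⁻¹ := by
          rw [norm_mul, Complex.norm_I, mul_one, Complex.norm_real, Complex.norm_real,
            Real.norm_eq_abs, Real.norm_eq_abs, abs_div, abs_mul, abs_of_pos two_pi_pos,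
            abs_of_pos hH, div_eq_mul_inv]
        _ ≤ (1 + 2 * π * |ξ|) * H⁻¹ := by linarith
    have hrotate (x : ℝ) : φ x * Complex.exp (-(σ * x))
        * Complex.exp ((2 * π * ξ * ((x - T) / H) : ℝ) * I)
        = φ x * Complex.exp (-(δ * x)) * Complex.exp ((-(2 * π * ξ * T / H) : ℝ) * I) := by
      simp only [mul_assoc (φ x : ℂ), ← Complex.exp_add, hδ]
      congr 2
      push_cast
      ring
    simp only [hrotate]
    rw [integral_mul_const, norm_mul, Complex.norm_exp_ofReal_mul_I, mul_one]
    exact (hφC δ (by simp [hδ, -Complex.ofReal_div, -Complex.ofReal_mul])).trans (by gcongr)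
  rw [integral_mul_schwartzMap_comp g (integrableOn_ofReal_mul_cexp (δ := σ) hφ) (by fun_prop)]
  calc _ ≤ ∫ ξ, C * H⁻¹ * ((1 + 2 * π * |ξ|) * ‖𝓕 g ξ‖) := by
        refine norm_integral_le_of_norm_le
          ((integrable_one_add_mul_norm_fourier g _).const_mul _) (ae_of_all _ fun ξ ↦ ?_)
        calc _ ≤ ‖𝓕 g ξ‖ * (C * ((1 + 2 * π * |ξ|) * H⁻¹)) := by
              rw [norm_mul]
              gcongr
              exact hslice ξ
          _ = C * H⁻¹ * ((1 + 2 * π * |ξ|) * ‖𝓕 g ξ‖) := by ring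
    _ = C * (∫ ξ, (1 + 2 * π * |ξ|) * ‖𝓕 g ξ‖) / H := by
        rw [integral_const_mul]
        ring

lemma exists_schwartzMap_support_eq_Ioo :
    ∃ (k : ℝ → ℝ) (g : 𝓢(ℝ, ℂ)), (∀ x, g x = k x) ∧ Continuous k ∧ (∀ x, 0 ≤ k x) ∧
      (∀ x, k x ≤ 1) ∧ Function.support k = Ioo 0 1 ∧ 0 < ∫ x, k x := by
  obtain ⟨k, hsupp, hsmooth, hrange⟩ :=
    (isOpen_Ioo (a := (0 : ℝ)) (b := 1)).exists_contDiff_support_eq (n := (⊤ : ℕ∞))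
  have hcompact : HasCompactSupport k :=
    HasCompactSupport.intro isCompact_Icc fun x hx ↦ Function.notMem_support.1 fun h ↦
      hx (Ioo_subset_Icc_self (hsupp ▸ h))
  have hk0 (x : ℝ) : 0 ≤ k x := (hrange ⟨x, rfl⟩).1
  refine ⟨k, (hcompact.comp_left Complex.ofReal_zero).toSchwartzMap
    (Complex.ofRealCLM.contDiff.comp hsmooth), fun x ↦ rfl, hsmooth.continuous, hk0,
    fun x ↦ (hrange ⟨x, rfl⟩).2, hsupp, ?_⟩
  rw [integral_pos_iff_support_of_nonneg hk0
    (hsmooth.continuous.integrable_of_hasCompactSupport hcompact), hsupp]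
  simp

lemma mul_integral_le_exp_mul_integral {k : ℝ → ℝ} (hk : Continuous k) (hk0 : ∀ x, 0 ≤ k x)
    (hk1 : ∀ x, k x ≤ 1) (hsupp : Function.support k = Ioo 0 1) (hT : 0 < T) (hH : 0 < H)
    (hHT : H ≤ T) {d : ℝ} (hd : 0 ≤ d)
    (hφ : IntegrableOn (fun x ↦ φ x * Real.exp (-(T⁻¹ * x))) (Ioi 0))
    (hdφ : ∀ x ∈ Ioo T (T + H), d ≤ φ x) :
    d * (H * ∫ x, k x)
      ≤ Real.exp 2 * ∫ x in Ioi (0 : ℝ), φ x * Real.exp (-(T⁻¹ * x)) * k ((x - T) / H) := by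
  have hsupport {x : ℝ} (hx : x ∉ Ioo T (T + H)) : k ((x - T) / H) = 0 := by
    refine Function.notMem_support.1 fun h ↦ hx ?_
    rw [hsupp, mem_Ioo, div_pos_iff_of_pos_right hH, div_lt_one hH] at h
    exact ⟨by linarith [h.1], by linarith [h.2]⟩
  have hki : Integrable k := hk.integrable_of_hasCompactSupport
    (HasCompactSupport.intro isCompact_Icc fun x hx ↦ Function.notMem_support.1 fun h ↦
      hx (Ioo_subset_Icc_self (hsupp ▸ h)))
  have hmass : ∫ x in Ioi (0 : ℝ), k ((x - T) / H) = H * ∫ x, k x := by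
    have hvanish : ∀ x ∉ Ioi (0 : ℝ), k ((x - T) / H) = 0 :=
      fun x hx ↦ hsupport fun h ↦ hx (hT.trans h.1)
    rw [setIntegral_eq_integral_of_forall_compl_eq_zero hvanish,
      integral_sub_right_eq_self (fun x ↦ k (x / H)), Measure.integral_comp_div, abs_of_pos hH,
      smul_eq_mul]
  rw [← hmass, ← integral_const_mul, ← integral_const_mul]
  refine integral_mono (((hki.comp_div hH.ne').comp_sub_right T).integrableOn.const_mul d)
    ((hφ.mul_bdd (c := 1) (by fun_prop) (ae_of_all _ fun x ↦ ?_)).const_mul _) fun x ↦ ?_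
  · rw [Real.norm_of_nonneg (hk0 _)]
    exact hk1 _
  · by_cases hx : x ∈ Ioo T (T + H)
    · have hexp : 1 ≤ Real.exp 2 * Real.exp (-(T⁻¹ * x)) := by
        rw [← Real.exp_add, Real.one_le_exp_iff]
        have : T⁻¹ * x ≤ 2 := by rw [inv_mul_le_iff₀ hT]; linarith [hx.2]
        linarith
      have hφ0 : 0 ≤ φ x := hd.trans (hdφ x hx)
      calc d * k ((x - T) / H) ≤ φ x * 1 * k ((x - T) / H) := by
            rw [mul_one]
            exact mul_le_mul_of_nonneg_right (hdφ x hx) (hk0 _)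
        _ ≤ φ x * (Real.exp 2 * Real.exp (-(T⁻¹ * x))) * k ((x - T) / H) := by
            have := hk0 ((x - T) / H)
            gcongr
        _ = _ := by ring
    · simp [hsupport hx]

theorem exists_le_add_of_norm_laplace_sub_le {F G : ℝ → ℝ} (hF : Monotone F) (hG : Monotone G)
    (hFi : ∀ σ > 0, IntegrableOn (fun x ↦ F x * Real.exp (-(σ * x))) (Ioi 0))
    (hGi : ∀ σ > 0, IntegrableOn (fun x ↦ G x * Real.exp (-(σ * x))) (Ioi 0)) {β : ℝ}
    (hFG : ∀ δ : ℂ, 0 < δ.re → δ.re ≤ 1 →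
      ‖∫ x in Ioi (0 : ℝ), (F x - G x : ℝ) * Complex.exp (-(δ * x))‖ ≤ C * δ.re ^ (-β) * ‖δ‖) :
    ∃ B, ∀ T H : ℝ, 1 ≤ T → 0 < H → H ≤ T → F T ≤ G (T + H) + B * T ^ β / H ^ 2 := by
  obtain ⟨k, g, hgk, hk, hk0, hk1, hsupp, hkpos⟩ := exists_schwartzMap_support_eq_Ioo
  set J := ∫ ξ, (1 + 2 * π * |ξ|) * ‖𝓕 g ξ‖
  set κ := ∫ x, k x
  have hC : 0 ≤ C := by simpa using (norm_nonneg _).trans (hFG 1 (by simp) (by simp))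
  refine ⟨Real.exp 2 * C * J / κ, fun T H hT hH hHT ↦ ?_⟩
  have hT0 : 0 < T := by linarith
  rcases le_total (F T - G (T + H)) 0 with hneg | hpos
  · have : 0 ≤ J := integral_nonneg fun ξ ↦ by positivity
    have : 0 ≤ Real.exp 2 * C * J / κ * T ^ β / H ^ 2 := by positivity
    linarith
  have hint : IntegrableOn (fun x ↦ (F x - G x) * Real.exp (-(T⁻¹ * x))) (Ioi 0) :=
    ((hFi _ (inv_pos.2 hT0)).sub (hGi _ (inv_pos.2 hT0))).congr
      (ae_of_all _ fun x ↦ (sub_mul _ _ _).symm)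
  have hlower : (F T - G (T + H)) * (H * κ) ≤ Real.exp 2
      * ∫ x in Ioi (0 : ℝ), (F x - G x) * Real.exp (-(T⁻¹ * x)) * k ((x - T) / H) :=
    mul_integral_le_exp_mul_integral hk hk0 hk1 hsupp hT0 hH hHT hpos hint
      fun x hx ↦ sub_le_sub (hF hx.1.le) (hG hx.2.le)
  have hupper : ∫ x in Ioi (0 : ℝ), (F x - G x) * Real.exp (-(T⁻¹ * x)) * k ((x - T) / H)
      ≤ C * T ^ β * J / H := by
    refine (Real.le_norm_self _).trans ?_
    rw [← Complex.norm_real, ← integral_complex_ofReal]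
    have := norm_integral_mul_exp_mul_schwartzMap_le (T := T) g hH
      (by rw [abs_of_pos (inv_pos.2 hT0)]; gcongr) (by positivity : 0 ≤ C * T ^ β) hint
      fun δ hδ ↦ by
        have := hFG δ (hδ ▸ inv_pos.2 hT0) (hδ ▸ inv_le_one_of_one_le₀ hT)
        rwa [hδ, Real.inv_rpow hT0.le, Real.rpow_neg hT0.le, inv_inv] at this
    simpa [hgk] using this
  have hmain := hlower.trans (mul_le_mul_of_nonneg_left hupper (Real.exp_pos 2).le)
  have : F T - G (T + H) ≤ Real.exp 2 * C * J / κ * T ^ β / H ^ 2 := by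
    rw [← le_div_iff₀ (by positivity)] at hmain
    refine hmain.trans_eq ?_
    field_simp
  linarith

end Tauberian

/-! ### Laplace transforms of cumulative distributions -/

section Cumulative

lemma setIntegral_Ioi_indicator_Ici {E : Type*} [NormedAddCommGroup E] [NormedSpace ℝ E]
    (f : ℝ → E) {a b : ℝ} (hab : a ≤ b) :
    ∫ x in Ioi a, (Ici b).indicator f x = ∫ x in Ioi b, f x := by
  rw [integral_indicator measurableSet_Ici, Measure.restrict_restrict measurableSet_Ici]
  refine setIntegral_congr_set ((Ioi_ae_eq_Ici.symm.inter (ae_eq_refl _)).trans ?_)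
  rw [inter_eq_left.2 (Ioi_subset_Ioi hab)]
  exact ae_eq_refl _

variable {α : Type*} [MeasurableSpace α] {m : Measure α} {u w : α → ℝ} {δ : ℂ}

lemma integrable_prod_indicator_mul_cexp (hu : Measurable u) (hw : Measurable w)
    (hu0 : ∀ᵐ a ∂m, 0 ≤ u a) (hδ : 0 < δ.re)
    (hint : Integrable (fun a ↦ w a * Real.exp (-(δ.re * u a))) m) :
    Integrable (fun z : α × ℝ ↦ (Ici (u z.1)).indicator
      (fun x : ℝ ↦ w z.1 * Complex.exp (-(δ * x))) z.2) (m.prod (volume.restrict (Ioi 0))) := by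
  have hmeas : Measurable fun z : α × ℝ ↦ (Ici (u z.1)).indicator
      (fun x : ℝ ↦ w z.1 * Complex.exp (-(δ * x))) z.2 :=
    (by fun_prop : Measurable fun z : α × ℝ ↦ w z.1 * Complex.exp (-(δ * z.2))).indicator
      (measurableSet_le (by fun_prop : Measurable fun z : α × ℝ ↦ u z.1) measurable_snd)
  refine (integrable_prod_iff hmeas.aestronglyMeasurable).2 ⟨ae_of_all _ fun a ↦ ?_, ?_⟩
  · have hexp := (integrableOn_exp_mul_complex_Ioi (a := -δ) (by simpa using hδ) 0).const_mul
      (w a : ℂ)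
    simp only [neg_mul] at hexp
    exact Integrable.indicator hexp (measurableSet_Ici (a := u a))
  · refine (hint.norm.const_mul δ.re⁻¹).congr ?_
    filter_upwards [hu0] with a ha
    have hexp := integral_exp_mul_Ioi (a := -δ.re) (by linarith) (u a)
    simp only [neg_mul, neg_div_neg_eq] at hexp
    simp only [norm_indicator_eq_indicator_norm, norm_mul, Complex.norm_real, Complex.norm_exp,
      Complex.neg_re, Complex.re_mul_ofReal, Real.norm_of_nonneg (Real.exp_pos _).le]
    rw [setIntegral_Ioi_indicator_Ici _ ha, integral_const_mul, hexp]
    ring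

lemma integral_indicator_Ici_mul_cexp (hu : Measurable u) (x : ℝ) :
    ∫ a, (Ici (u a)).indicator (fun x : ℝ ↦ w a * Complex.exp (-(δ * x))) x ∂m
      = (∫ a in {a | u a ≤ x}, w a ∂m : ℝ) * Complex.exp (-(δ * x)) := by
  rw [← integral_complex_ofReal, ← integral_mul_const,
    ← integral_indicator (measurableSet_le hu measurable_const)]
  rfl

variable [SFinite m]

theorem integral_cumulative_mul_cexp (hu : Measurable u) (hw : Measurable w)
    (hu0 : ∀ᵐ a ∂m, 0 ≤ u a) (hδ : 0 < δ.re)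
    (hint : Integrable (fun a ↦ w a * Real.exp (-(δ.re * u a))) m) :
    ∫ x in Ioi (0 : ℝ), (∫ a in {a | u a ≤ x}, w a ∂m : ℝ) * Complex.exp (-(δ * x))
      = δ⁻¹ * ∫ a, w a * Complex.exp (-(δ * u a)) ∂m := by
  simp only [← integral_indicator_Ici_mul_cexp hu]
  rw [← integral_integral_swap (integrable_prod_indicator_mul_cexp hu hw hu0 hδ hint),
    ← integral_const_mul]
  refine integral_congr_ae ?_
  filter_upwards [hu0] with a ha
  have hexp := integral_exp_mul_complex_Ioi (a := -δ) (by simpa using hδ) (u a)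
  simp only [neg_mul, neg_div_neg_eq] at hexp
  rw [setIntegral_Ioi_indicator_Ici _ ha, integral_const_mul, hexp]
  ring

lemma integrableOn_cumulative_mul_exp {σ : ℝ} (hu : Measurable u) (hw : Measurable w)
    (hu0 : ∀ᵐ a ∂m, 0 ≤ u a) (hσ : 0 < σ)
    (hint : Integrable (fun a ↦ w a * Real.exp (-(σ * u a))) m) :
    IntegrableOn (fun x ↦ (∫ a in {a | u a ≤ x}, w a ∂m) * Real.exp (-(σ * x))) (Ioi 0) := by
  have hprod := (integrable_prod_indicator_mul_cexp (δ := σ) hu hw hu0 hσ hint).integral_prod_right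
  simp only [integral_indicator_Ici_mul_cexp hu] at hprod
  refine hprod.re.congr (ae_of_all _ fun x ↦ ?_)
  simp only
  rw [show -((σ : ℂ) * x) = ((-(σ * x) : ℝ) : ℂ) by push_cast; rfl, ← Complex.ofReal_exp,
    ← Complex.ofReal_mul]
  exact Complex.ofReal_re _

end Cumulative

/-! ### Mean square against divisor sum -/

/-- The mean square `∫₀ˣ Z(t)² dt` of Hardy's function. -/
noncomputable def meanSquare (x : ℝ) : ℝ := ∫ t in (0 : ℝ)..x, Z2 t

/-- The divisor sum `∑ d(n)` over `2πn ≤ x`, scaled by `2π`: it has (nearly) the same Laplace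
transform as `meanSquare`. -/
noncomputable def scaledDivisorSum (x : ℝ) : ℝ :=
  2 * π * ∑ n ∈ Finset.Ioc 0 ⌊x / (2 * π)⌋₊, (n.divisors.card : ℝ)

lemma meanSquare_eq_setIntegral {x : ℝ} (hx : 0 ≤ x) :
    ∫ t in {t | t ≤ x}, Z2 t ∂volume.restrict (Ioi 0) = meanSquare x := by
  change ∫ t in Iic x, Z2 t ∂volume.restrict (Ioi 0) = _
  rw [meanSquare, intervalIntegral.integral_of_le hx, Measure.restrict_restrict measurableSet_Iic,
    inter_comm, Ioi_inter_Iic]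

lemma integrableOn_count_coe_finset (s : Finset ℕ) (f : ℕ → ℝ) :
    IntegrableOn f s Measure.count := by
  rw [← biUnion_of_singleton (SetLike.coe s), integrableOn_finite_biUnion s.finite_toSet]
  simp

lemma scaledDivisorSum_eq_setIntegral {x : ℝ} (hx : 0 ≤ x) :
    ∫ n in {n : ℕ | 2 * π * n ≤ x}, 2 * π * (n.divisors.card : ℝ) ∂Measure.count
      = scaledDivisorSum x := by
  have hset : {n : ℕ | 2 * π * n ≤ x} = Finset.Icc 0 ⌊x / (2 * π)⌋₊ := by
    ext n
    rw [mem_ofPred_eq, Finset.coe_Icc, mem_Icc, Nat.le_floor_iff (by positivity),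
      le_div_iff₀' two_pi_pos, and_iff_right n.zero_le]
  rw [hset, setIntegral_finset _ (integrableOn_count_coe_finset _ _), scaledDivisorSum,
    Finset.mul_sum, Finset.Icc_eq_cons_Ioc (Nat.zero_le _), Finset.sum_cons]
  simp [Measure.real]

lemma monotone_meanSquare : Monotone meanSquare := fun x y hxy ↦ by
  rw [← sub_nonneg, meanSquare, meanSquare,
    intervalIntegral.integral_interval_sub_left (continuous_Z2.intervalIntegrable _ _)
      (continuous_Z2.intervalIntegrable _ _)]
  exact intervalIntegral.integral_nonneg hxy fun t _ ↦ Z2_nonneg t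

lemma monotone_scaledDivisorSum : Monotone scaledDivisorSum := fun x y hxy ↦ by
  unfold scaledDivisorSum
  gcongr

lemma integrable_count_divisors_mul_exp {σ : ℝ} (hσ : 0 < σ) :
    Integrable (fun n : ℕ ↦ 2 * π * (n.divisors.card : ℝ) * Real.exp (-(σ * (2 * π * n))))
      Measure.count := by
  have hsummable := (summable_coeff_mul_exp_neg zetaSqCoeff_zero (c := 3 / 2) (by norm_num)
    (LSeriesSummable_zetaSqCoeff (by norm_num)) (x := (2 * π * σ : ℝ))
    (by rw [Complex.ofReal_re]; positivity)).norm
  rw [integrable_count_iff]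
  refine (hsummable.mul_left (2 * π)).congr fun n ↦ ?_
  rw [zetaSqCoeff, norm_mul, norm_mul, Complex.norm_exp, Complex.norm_natCast,
    Real.norm_of_nonneg (Real.exp_pos _).le, Real.norm_of_nonneg (by positivity), mul_assoc]
  simp
  ring_nf

lemma integrableOn_meanSquare_mul_exp {σ : ℝ} (hσ : 0 < σ) :
    IntegrableOn (fun x ↦ meanSquare x * Real.exp (-(σ * x))) (Ioi 0) := by
  refine (integrableOn_cumulative_mul_exp measurable_id continuous_Z2.measurable
    ((ae_restrict_mem measurableSet_Ioi).mono fun t ht ↦ le_of_lt ht) hσ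
    (integrableOn_Z2_mul_exp hσ)).congr_fun (fun x hx ↦ ?_) measurableSet_Ioi
  simp only [id, meanSquare_eq_setIntegral (le_of_lt hx)]

lemma integrableOn_scaledDivisorSum_mul_exp {σ : ℝ} (hσ : 0 < σ) :
    IntegrableOn (fun x ↦ scaledDivisorSum x * Real.exp (-(σ * x))) (Ioi 0) := by
  refine (integrableOn_cumulative_mul_exp (.of_discrete) (.of_discrete)
    (ae_of_all _ fun n ↦ by positivity) hσ
    (integrable_count_divisors_mul_exp hσ)).congr_fun (fun x hx ↦ ?_) measurableSet_Ioi
  simp only [scaledDivisorSum_eq_setIntegral (le_of_lt hx)]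

lemma integral_meanSquare_mul_cexp {δ : ℂ} (hδ : 0 < δ.re) :
    ∫ x in Ioi (0 : ℝ), meanSquare x * Complex.exp (-(δ * x)) = δ⁻¹ * hardyLaplace δ := by
  refine (setIntegral_congr_fun measurableSet_Ioi fun x hx ↦ ?_).trans
    (integral_cumulative_mul_cexp measurable_id continuous_Z2.measurable
      ((ae_restrict_mem measurableSet_Ioi).mono fun t ht ↦ le_of_lt ht) hδ
      (integrableOn_Z2_mul_exp hδ))
  simp only [meanSquare_eq_setIntegral (le_of_lt hx)]

lemma integral_scaledDivisorSum_mul_cexp {δ : ℂ} (hδ : 0 < δ.re) :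
    ∫ x in Ioi (0 : ℝ), scaledDivisorSum x * Complex.exp (-(δ * x))
      = δ⁻¹ * (2 * π * expSeries zetaSqCoeff (2 * π * δ)) := by
  have hint := integrable_count_divisors_mul_exp hδ
  have hcint : Integrable (fun n : ℕ ↦ ((2 * π * (n.divisors.card : ℝ) : ℝ) : ℂ)
      * Complex.exp (-(δ * (2 * π * n : ℝ)))) Measure.count := by
    refine (integrable_norm_iff (.of_discrete)).1 (hint.congr (ae_of_all _ fun n ↦ ?_))
    simp only
    rw [norm_mul, Complex.norm_real, Real.norm_of_nonneg (by positivity), Complex.norm_exp,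
      Complex.neg_re, Complex.re_mul_ofReal]
  have hseries : ∫ n : ℕ, ((2 * π * (n.divisors.card : ℝ) : ℝ) : ℂ)
      * Complex.exp (-(δ * (2 * π * n : ℝ))) ∂Measure.count
      = 2 * π * expSeries zetaSqCoeff (2 * π * δ) := by
    rw [integral_countable hcint, expSeries, ← tsum_mul_left]
    refine tsum_congr fun n ↦ ?_
    simp only [Measure.real, Measure.count_singleton, ENNReal.toReal_one, one_smul, zetaSqCoeff]
    push_cast
    ring_nf
  rw [← hseries, ← integral_cumulative_mul_cexp (.of_discrete) (.of_discrete)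
    (ae_of_all _ fun n ↦ by positivity) hδ hint]
  refine setIntegral_congr_fun measurableSet_Ioi fun x hx ↦ ?_
  simp only [scaledDivisorSum_eq_setIntegral (le_of_lt hx)]

theorem exists_norm_integral_meanSquare_sub_scaledDivisorSum_le :
    ∃ C, ∀ δ : ℂ, 0 < δ.re → δ.re ≤ 1 →
      ‖∫ x in Ioi (0 : ℝ), (meanSquare x - scaledDivisorSum x : ℝ) * Complex.exp (-(δ * x))‖
        ≤ C * δ.re ^ (-(5 / 2) : ℝ) * ‖δ‖ := by
  obtain ⟨C, hC⟩ := exists_norm_hardyLaplace_sub_expSeries_le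
  refine ⟨C, fun δ hδ hδ1 ↦ ?_⟩
  have hδ0 : 0 < ‖δ‖ := hδ.trans_le (Complex.re_le_norm δ)
  simp only [Complex.ofReal_sub, sub_mul]
  rw [integral_sub (integrableOn_ofReal_mul_cexp (integrableOn_meanSquare_mul_exp hδ))
      (integrableOn_ofReal_mul_cexp (integrableOn_scaledDivisorSum_mul_exp hδ)),
    integral_meanSquare_mul_cexp hδ, integral_scaledDivisorSum_mul_cexp hδ, ← mul_sub, norm_mul,
    norm_inv, inv_mul_le_iff₀ hδ0]
  exact (hC δ hδ hδ1).trans_eq (by ring)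

theorem exists_meanSquare_le_scaledDivisorSum_add :
    ∃ B, ∀ T H : ℝ, 1 ≤ T → 0 < H → H ≤ T →
      meanSquare T ≤ scaledDivisorSum (T + H) + B * T ^ (5 / 2 : ℝ) / H ^ 2 := by
  obtain ⟨C, hC⟩ := exists_norm_integral_meanSquare_sub_scaledDivisorSum_le
  exact exists_le_add_of_norm_laplace_sub_le (C := C) monotone_meanSquare
    monotone_scaledDivisorSum (fun _ ↦ integrableOn_meanSquare_mul_exp)
    (fun _ ↦ integrableOn_scaledDivisorSum_mul_exp) hC

theorem exists_scaledDivisorSum_le_meanSquare_add :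
    ∃ B, ∀ T H : ℝ, 1 ≤ T → 0 < H → H ≤ T →
      scaledDivisorSum T ≤ meanSquare (T + H) + B * T ^ (5 / 2 : ℝ) / H ^ 2 := by
  obtain ⟨C, hC⟩ := exists_norm_integral_meanSquare_sub_scaledDivisorSum_le
  refine exists_le_add_of_norm_laplace_sub_le (C := C) monotone_scaledDivisorSum monotone_meanSquare
    (fun _ ↦ integrableOn_scaledDivisorSum_mul_exp) (fun _ ↦ integrableOn_meanSquare_mul_exp)
    fun δ hδ hδ1 ↦ ?_
  rw [← norm_neg, ← integral_neg]
  simpa only [← neg_mul, ← Complex.ofReal_neg, neg_sub] using hC δ hδ hδ1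

/-! ### Dirichlet's divisor problem -/

lemma sum_Ioc_div_add_sq (N : ℕ) :
    ∑ m ∈ Finset.Ioc 0 N, N / m + N.sqrt ^ 2 = 2 * ∑ m ∈ Finset.Ioc 0 N.sqrt, N / m := by
  set r := N.sqrt
  have hrN : r * r ≤ N := N.sqrt_le
  have hNr : N < (r + 1) * (r + 1) := N.lt_succ_sqrt
  have hswap : ∑ m ∈ Finset.Ioc r N, N / m = ∑ n ∈ Finset.Ioc 0 r, (N / n - r) := by
    suffices ∑ m ∈ Finset.Ioc r N, ∑ _n ∈ Finset.Ioc 0 (N / m), 1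
        = ∑ n ∈ Finset.Ioc 0 r, ∑ _m ∈ Finset.Ioc r (N / n), 1 by simpa using this
    refine Finset.sum_comm' fun m n ↦ ?_
    simp only [Finset.mem_Ioc]
    constructor
    · rintro ⟨⟨hrm, -⟩, hn, hnm⟩
      rw [Nat.le_div_iff_mul_le (by omega)] at hnm
      refine ⟨⟨hrm, (Nat.le_div_iff_mul_le hn).2 (by linarith)⟩, hn, ?_⟩
      by_contra! hrn
      nlinarith
    · rintro ⟨⟨hrm, hmn⟩, hn, -⟩
      rw [Nat.le_div_iff_mul_le hn] at hmn
      exact ⟨⟨hrm, by nlinarith⟩, hn, (Nat.le_div_iff_mul_le (by omega)).2 (by linarith)⟩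
  have hsub : ∑ n ∈ Finset.Ioc 0 r, (N / n - r) + r ^ 2 = ∑ n ∈ Finset.Ioc 0 r, N / n := by
    have hconst : r ^ 2 = ∑ _n ∈ Finset.Ioc 0 r, r := by simp [sq]
    rw [hconst, ← Finset.sum_add_distrib]
    refine Finset.sum_congr rfl fun n hn ↦ Nat.sub_add_cancel ?_
    rw [Finset.mem_Ioc] at hn
    exact (Nat.le_div_iff_mul_le hn.1).2 ((Nat.mul_le_mul_left r hn.2).trans hrN)
  rw [← Finset.sum_Ioc_consecutive _ (Nat.zero_le r) N.sqrt_le_self, hswap, add_assoc, hsub,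
    two_mul]

lemma sum_card_divisors_add_sq (N : ℕ) :
    ∑ n ∈ Finset.Ioc 0 N, n.divisors.card + N.sqrt ^ 2 = 2 * ∑ m ∈ Finset.Ioc 0 N.sqrt, N / m := by
  simpa only [← ArithmeticFunction.sum_Ioc_sigma0_eq_sum_div, ArithmeticFunction.sigma_zero_apply]
    using sum_Ioc_div_add_sq N

lemma abs_sum_floor_div_sub_mul_harmonic_le (N r : ℕ) :
    |∑ m ∈ Finset.Ioc 0 r, ((N / m : ℕ) : ℝ) - N * harmonic r| ≤ r := by
  have hharm : (N * harmonic r : ℝ) = ∑ m ∈ Finset.Ioc 0 r, (N : ℝ) / m := by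
    rw [harmonic_eq_sum_Icc, Rat.cast_sum, Finset.mul_sum]
    push_cast
    rfl
  rw [hharm, ← Finset.sum_sub_distrib]
  refine (Finset.abs_sum_le_sum_abs _ _).trans
    ((Finset.sum_le_card_nsmul _ _ 1 fun m _ ↦ ?_).trans_eq (by simp))
  rw [← Nat.floor_div_eq_div (K := ℝ), abs_sub_comm, abs_le]
  have hle := Nat.floor_le (by positivity : 0 ≤ (N : ℝ) / m)
  have hlt := Nat.lt_floor_add_one ((N : ℝ) / m)
  constructor <;> linarith

lemma abs_sum_card_divisors_sub_le (N : ℕ) :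
    |∑ n ∈ Finset.Ioc 0 N, (n.divisors.card : ℝ)
      - (2 * N * harmonic N.sqrt - (N.sqrt : ℝ) ^ 2)| ≤ (2 * N.sqrt : ℝ) := by
  have hsum : ∑ n ∈ Finset.Ioc 0 N, (n.divisors.card : ℝ) + (N.sqrt : ℝ) ^ 2
      = 2 * ∑ m ∈ Finset.Ioc 0 N.sqrt, ((N / m : ℕ) : ℝ) := mod_cast sum_card_divisors_add_sq N
  have hharm := abs_le.1 (abs_sum_floor_div_sub_mul_harmonic_le N N.sqrt)
  rw [abs_le]
  constructor <;> linarith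

lemma tendsto_nat_sqrt_atTop : Tendsto Nat.sqrt atTop atTop :=
  tendsto_atTop.2 fun b ↦ (eventually_ge_atTop (b * b)).mono fun _ ↦ Nat.le_sqrt.2

lemma tendsto_nat_sqrt_div : Tendsto (fun N : ℕ ↦ (N.sqrt : ℝ) / N) atTop (𝓝 0) := by
  refine squeeze_zero (fun N ↦ by positivity) (fun N ↦ ?_)
    (tendsto_inv_atTop_zero.comp (tendsto_natCast_atTop_atTop.comp tendsto_nat_sqrt_atTop))
  have hsq : (N.sqrt : ℝ) * N.sqrt ≤ N := mod_cast N.sqrt_le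
  rcases N.eq_zero_or_pos with rfl | hN
  · simp
  · have hr : (0 : ℝ) < N.sqrt := mod_cast Nat.sqrt_pos.2 hN
    rw [Function.comp_apply, Function.comp_apply, div_le_iff₀ (mod_cast hN), inv_mul_eq_div,
      le_div_iff₀ hr]
    exact hsq

lemma tendsto_nat_sqrt_sq_div : Tendsto (fun N : ℕ ↦ (N.sqrt : ℝ) ^ 2 / N) atTop (𝓝 1) := by
  have hlower : Tendsto (fun N : ℕ ↦ 1 - 2 * ((N.sqrt : ℝ) / N)) atTop (𝓝 1) := by
    simpa using (tendsto_nat_sqrt_div.const_mul 2).const_sub 1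
  refine tendsto_of_tendsto_of_tendsto_of_le_of_le' hlower tendsto_const_nhds ?_
    (Eventually.of_forall fun N ↦ div_le_one_of_le₀ (mod_cast N.sqrt_le') (by positivity))
  filter_upwards [eventually_gt_atTop 0] with N hN
  have hN0 : (0 : ℝ) < N := mod_cast hN
  have hle : (N : ℝ) ≤ N.sqrt * N.sqrt + N.sqrt + N.sqrt := mod_cast N.sqrt_le_add
  rw [sub_le_iff_le_add, ← mul_div_assoc, ← add_div, le_div_iff₀ hN0]
  linarith

theorem tendsto_sum_card_divisors_div_sub_log :
    Tendsto (fun N : ℕ ↦ (∑ n ∈ Finset.Ioc 0 N, (n.divisors.card : ℝ)) / N - Real.log N) atTop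
      (𝓝 (2 * eulerMascheroniConstant - 1)) := by
  have hharm := tendsto_harmonic_sub_log.comp tendsto_nat_sqrt_atTop
  have hlog : Tendsto (fun N : ℕ ↦ Real.log ((N.sqrt : ℝ) ^ 2 / N)) atTop (𝓝 0) := by
    simpa using tendsto_nat_sqrt_sq_div.log one_ne_zero
  have hmain := ((hharm.const_mul 2).add hlog).sub tendsto_nat_sqrt_sq_div
  have hdiff : Tendsto (fun N : ℕ ↦ (∑ n ∈ Finset.Ioc 0 N, (n.divisors.card : ℝ)
      - (2 * N * harmonic N.sqrt - (N.sqrt : ℝ) ^ 2)) / N) atTop (𝓝 0) := by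
    refine squeeze_zero_norm (fun N ↦ ?_) (by simpa using tendsto_nat_sqrt_div.const_mul 2)
    rw [norm_div, RCLike.norm_natCast, ← mul_div_assoc]
    exact div_le_div_of_nonneg_right (abs_sum_card_divisors_sub_le N) (by positivity)
  refine ((hmain.add hdiff).congr' ?_).trans_eq (by simp)
  filter_upwards [eventually_gt_atTop 0] with N hN
  have hN0 : (0 : ℝ) < N := mod_cast hN
  have : (0 : ℝ) < N.sqrt := mod_cast Nat.sqrt_pos.2 hN
  rw [Function.comp_apply, Real.log_div (by positivity) hN0.ne', Real.log_pow]
  field_simp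
  push_cast
  ring

/-! ### Asymptotics `x log x + b x + o(x)` -/

/-- `F x = x log x + b x + o(x)` as `x → ∞`. -/
def HasLogLinearAsymptotics (F : ℝ → ℝ) (b : ℝ) : Prop :=
  Tendsto (fun x ↦ F x / x - Real.log x) atTop (𝓝 b)

lemma tendsto_div_sub_log_of_ratio {ι : Type*} {l : Filter ι} {f u v : ι → ℝ} {a b : ℝ}
    (hf : Tendsto (fun i ↦ f i / u i - Real.log (u i)) l (𝓝 b)) (hv : Tendsto v l atTop)
    (huv : Tendsto (fun i ↦ (u i / v i - 1) * Real.log (v i)) l (𝓝 a)) :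
    Tendsto (fun i ↦ f i / v i - Real.log (v i)) l (𝓝 (a + b)) := by
  have hlog : Tendsto (fun i ↦ Real.log (v i)) l atTop := tendsto_log_atTop.comp hv
  have hratio : Tendsto (fun i ↦ u i / v i) l (𝓝 1) := by
    have hzero := (huv.div_atTop hlog).const_add 1
    rw [add_zero] at hzero
    refine hzero.congr' ?_
    filter_upwards [hlog.eventually_gt_atTop 0] with i hi
    field_simp
    ring
  have hratiolog : Tendsto (fun i ↦ Real.log (u i / v i)) l (𝓝 0) := by
    simpa using hratio.log one_ne_zero
  refine (((huv.add (hratio.mul hf)).add (hratio.mul hratiolog)).congr' ?_).trans_eq (by simp)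
  filter_upwards [hv.eventually_gt_atTop 0, hratio.eventually (lt_mem_nhds one_pos)] with i hi hui
  have : 0 < u i := (div_pos_iff_of_pos_right hi).1 hui
  rw [Real.log_div this.ne' hi.ne']
  field_simp
  ring

lemma hasLogLinearAsymptotics_natFloor {f : ℕ → ℝ} {b : ℝ}
    (hf : Tendsto (fun n : ℕ ↦ f n / n - Real.log n) atTop (𝓝 b)) :
    HasLogLinearAsymptotics (fun x ↦ f ⌊x⌋₊) b := by
  have hlog : Tendsto (fun x ↦ Real.log x / x) atTop (𝓝 0) :=
    isLittleO_log_id_atTop.tendsto_div_nhds_zero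
  suffices hfloor : Tendsto (fun x : ℝ ↦ ((⌊x⌋₊ : ℝ) / x - 1) * Real.log x) atTop (𝓝 0) by
    simpa [HasLogLinearAsymptotics] using
      tendsto_div_sub_log_of_ratio (hf.comp tendsto_nat_floor_atTop) tendsto_id hfloor
  refine squeeze_zero_norm' ?_ hlog
  filter_upwards [eventually_ge_atTop 1] with x hx
  have hx0 : 0 < x := by linarith
  have hle := Nat.floor_le hx0.le
  have hlt := Nat.lt_floor_add_one x
  rw [div_sub_one hx0.ne', div_mul_eq_mul_div, norm_div, norm_mul, Real.norm_of_nonneg hx0.le,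
    Real.norm_of_nonneg (Real.log_nonneg hx)]
  gcongr
  refine mul_le_of_le_one_left (Real.log_nonneg hx) ?_
  rw [Real.norm_eq_abs, abs_le]
  constructor <;> linarith

lemma tendsto_rpow_neg_mul_log {η : ℝ} (hη : 0 < η) :
    Tendsto (fun T ↦ T ^ (-η) * Real.log T) atTop (𝓝 0) := by
  refine (isLittleO_log_rpow_atTop hη).tendsto_div_nhds_zero.congr' ?_
  filter_upwards [eventually_gt_atTop 0] with T hT
  rw [Real.rpow_neg hT.le, div_eq_inv_mul]

lemma rpow_div_mul_rpow_neg_sq {T : ℝ} (hT : 0 < T) (β η : ℝ) :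
    T ^ β / (T * T ^ (-η)) ^ 2 = T ^ (β + 2 * η - 3) * T := by
  rw [div_eq_iff (by positivity), mul_pow, ← Real.rpow_natCast T 2, ← Real.rpow_mul_natCast hT.le,
    ← Real.rpow_add_one hT.ne', ← Real.rpow_add hT, ← Real.rpow_add hT]
  congr 1
  push_cast
  ring

namespace HasLogLinearAsymptotics

variable {F G : ℝ → ℝ} {a b : ℝ}

lemma const_mul_comp_div (hF : HasLogLinearAsymptotics F b) {c : ℝ} (hc : 0 < c) :
    HasLogLinearAsymptotics (fun x ↦ c * F (x / c)) (b - Real.log c) := by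
  refine ((hF.comp (tendsto_id.atTop_div_const hc)).sub_const (Real.log c)).congr' ?_
  filter_upwards [eventually_gt_atTop 0] with x hx
  rw [Function.comp_apply, id, Real.log_div hx.ne' hc.ne']
  field_simp
  ring

lemma comp_mul_one_add (hF : HasLogLinearAsymptotics F b) {g : ℝ → ℝ}
    (hg : Tendsto (fun T ↦ g T * Real.log T) atTop (𝓝 a)) :
    Tendsto (fun T ↦ F (T * (1 + g T)) / T - Real.log T) atTop (𝓝 (a + b)) := by
  have hg0 : Tendsto (fun T ↦ 1 + g T) atTop (𝓝 1) := by
    have hzero := (hg.div_atTop tendsto_log_atTop).const_add 1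
    rw [add_zero] at hzero
    refine hzero.congr' ?_
    filter_upwards [tendsto_log_atTop.eventually_gt_atTop 0] with T hT
    rw [mul_div_cancel_right₀ _ hT.ne']
  refine tendsto_div_sub_log_of_ratio (hF.comp (tendsto_id.atTop_mul_pos one_pos hg0)) tendsto_id
    (hg.congr' ?_)
  filter_upwards [eventually_gt_atTop 0] with T hT
  rw [mul_div_cancel_left₀ _ hT.ne', add_sub_cancel_left]

theorem of_le_add_of_le_add (hG : HasLogLinearAsymptotics G b) {β B B' : ℝ} (hβ0 : 0 ≤ β)
    (hβ : β < 3)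
    (hFG : ∀ T H : ℝ, 1 ≤ T → 0 < H → H ≤ T → F T ≤ G (T + H) + B * T ^ β / H ^ 2)
    (hGF : ∀ T H : ℝ, 1 ≤ T → 0 < H → H ≤ T → G T ≤ F (T + H) + B' * T ^ β / H ^ 2) :
    HasLogLinearAsymptotics F b := by
  obtain ⟨η, hη⟩ : ∃ η, η = (3 - β) / 4 := ⟨_, rfl⟩
  have hη0 : 0 < η := by linarith
  set g : ℝ → ℝ := fun T ↦ T ^ (-η)
  have hg : Tendsto g atTop (𝓝 0) := tendsto_rpow_neg_atTop hη0
  have hglog : Tendsto (fun T ↦ g T * Real.log T) atTop (𝓝 0) := tendsto_rpow_neg_mul_log hη0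
  have herror (D : ℝ) : Tendsto (fun T ↦ D * T ^ (-(2 * η))) atTop (𝓝 0) := by
    simpa using (tendsto_rpow_neg_atTop (y := 2 * η) (by positivity)).const_mul D
  have herror_eq (T : ℝ) (hT : 0 < T) : T ^ β / (T * g T) ^ 2 = T ^ (-(2 * η)) * T := by
    rw [rpow_div_mul_rpow_neg_sq hT, show β + 2 * η - 3 = -(2 * η) by linarith]
  have hupper := (hG.comp_mul_one_add hglog).add (herror B)
  have hlower := (hG.comp_mul_one_add (g := -g) (by simpa using hglog.neg)).sub (herror |B'|)
  rw [zero_add, add_zero] at hupper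
  rw [zero_add, sub_zero] at hlower
  have hsmall : ∀ᶠ T in atTop, 2 ≤ T ∧ 0 < T ∧ 0 < g T ∧ g T ≤ 1 / 2 := by
    filter_upwards [eventually_ge_atTop 2, hg.eventually (gt_mem_nhds one_half_pos)] with T hT hgT
    have hT0 : 0 < T := by linarith
    exact ⟨hT, hT0, Real.rpow_pos_of_pos hT0 _, hgT.le⟩
  refine tendsto_of_tendsto_of_tendsto_of_le_of_le' hlower hupper ?_ ?_
  · filter_upwards [hsmall] with T ⟨hT, hT0, hg0, hgT⟩
    have hshift := hGF (T * (1 + -g T)) (T * g T) (by nlinarith) (by positivity) (by nlinarith)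
    rw [show T * (1 + -g T) + T * g T = T by ring] at hshift
    have hpow : B' * (T * (1 + -g T)) ^ β / (T * g T) ^ 2 ≤ |B'| * (T ^ (-(2 * η)) * T) := by
      rw [mul_div_assoc, ← herror_eq T hT0]
      have : (T * (1 + -g T)) ^ β ≤ T ^ β :=
        Real.rpow_le_rpow (by nlinarith) (by nlinarith) hβ0
      have hbase : 0 ≤ T * (1 + -g T) := by nlinarith
      gcongr
      exact le_abs_self B'
    rw [sub_right_comm, sub_le_sub_iff_right, sub_le_iff_le_add, div_add' _ _ _ hT0.ne',
      Pi.neg_apply]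
    gcongr
    linarith
  · filter_upwards [hsmall] with T ⟨hT, hT0, hg0, hgT⟩
    have hshift := hFG T (T * g T) (by linarith) (by positivity) (by nlinarith)
    rw [mul_div_assoc, herror_eq T hT0, ← mul_one_add] at hshift
    rw [sub_add_eq_add_sub, sub_le_sub_iff_right, div_add' _ _ _ hT0.ne']
    gcongr
    linarith

theorem tendsto_sub_one_mul_log (hF : HasLogLinearAsymptotics F b) (hmono : Monotone F)
    {N : ℝ → ℝ} {c : ℝ} (hN : Tendsto (fun T ↦ F (N T) / T - Real.log T) atTop (𝓝 (c + b))) :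
    Tendsto (fun T ↦ (N T / T - 1) * Real.log T) atTop (𝓝 c) := by
  have hlog : ∀ᶠ T : ℝ in atTop, 0 < T ∧ 0 < Real.log T :=
    (eventually_gt_atTop 0).and (tendsto_log_atTop.eventually_gt_atTop 0)
  have hshift (a : ℝ) :
      Tendsto (fun T ↦ F (T * (1 + a / Real.log T)) / T - Real.log T) atTop (𝓝 (a + b)) := by
    refine hF.comp_mul_one_add (tendsto_const_nhds.congr' ?_)
    filter_upwards [hlog] with T ⟨_, hT⟩
    rw [div_mul_cancel₀ _ hT.ne']
  refine tendsto_order.2 ⟨fun a ha ↦ ?_, fun a ha ↦ ?_⟩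
  · filter_upwards [hlog, (hshift a).eventually_lt hN (by linarith)] with T ⟨hT, hlogT⟩ hlt
    have := hmono.reflect_lt ((div_lt_div_iff_of_pos_right hT).1 ((sub_lt_sub_iff_right _).1 hlt))
    rwa [← div_lt_iff₀ hlogT, lt_sub_iff_add_lt', lt_div_iff₀' hT]
  · filter_upwards [hlog, hN.eventually_lt (hshift a) (by linarith)] with T ⟨hT, hlogT⟩ hlt
    have := hmono.reflect_lt ((div_lt_div_iff_of_pos_right hT).1 ((sub_lt_sub_iff_right _).1 hlt))
    rwa [← lt_div_iff₀ hlogT, sub_lt_iff_lt_add', div_lt_iff₀' hT]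

end HasLogLinearAsymptotics

theorem hasLogLinearAsymptotics_meanSquare :
    HasLogLinearAsymptotics meanSquare (2 * eulerMascheroniConstant - 1 - Real.log (2 * π)) := by
  obtain ⟨B, hB⟩ := exists_meanSquare_le_scaledDivisorSum_add
  obtain ⟨B', hB'⟩ := exists_scaledDivisorSum_le_meanSquare_add
  exact ((hasLogLinearAsymptotics_natFloor tendsto_sum_card_divisors_div_sub_log).const_mul_comp_div
    two_pi_pos).of_le_add_of_le_add (by norm_num) (by norm_num) hB hB'

/-! ### Laplace averages -/

lemma integrableOn_pow_mul_exp_neg (n : ℕ) :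
    IntegrableOn (fun u ↦ u ^ n * Real.exp (-u)) (Ioi 0) := by
  refine (Real.GammaIntegral_convergent n.cast_add_one_pos).congr_fun (fun u _ ↦ ?_)
    measurableSet_Ioi
  simp only
  rw [add_sub_cancel_right, Real.rpow_natCast, mul_comm]

lemma integral_mul_exp_neg : ∫ u in Ioi (0 : ℝ), u * Real.exp (-u) = 1 := by
  rw [← Real.Gamma_two, Real.Gamma_eq_integral two_pos]
  refine setIntegral_congr_fun measurableSet_Ioi fun u _ ↦ ?_
  rw [show (2 - 1 : ℝ) = 1 by norm_num, Real.rpow_one, mul_comm]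

lemma integrableOn_mul_log_mul_exp_neg :
    IntegrableOn (fun u ↦ u * Real.log u * Real.exp (-u)) (Ioi 0) := by
  refine ((integrableOn_pow_mul_exp_neg 0).add (integrableOn_pow_mul_exp_neg 2)).mono'
    (by fun_prop) ?_
  filter_upwards [ae_restrict_mem measurableSet_Ioi] with u hu
  have hu0 : 0 < u := hu
  have hupper := Real.log_le_sub_one_of_pos hu0
  have hlower := Real.one_sub_inv_le_log_of_pos hu0
  have hinv : u * u⁻¹ = 1 := mul_inv_cancel₀ hu0.ne'
  rw [Pi.add_apply, ← add_mul, norm_mul, Real.norm_of_nonneg (Real.exp_pos _).le]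
  refine mul_le_mul_of_nonneg_right ?_ (Real.exp_pos _).le
  rw [Real.norm_eq_abs, abs_le]
  constructor <;> nlinarith

/-- This is the derivative of `Γ` at `2`. -/
lemma integral_mul_log_mul_exp_neg :
    ∫ u in Ioi (0 : ℝ), u * Real.log u * Real.exp (-u) = 1 - eulerMascheroniConstant := by
  have hGamma : (fun s ↦ Complex.Gamma s) =ᶠ[𝓝 2] Complex.GammaIntegral := by
    filter_upwards [(isOpen_lt continuous_const Complex.continuous_re).mem_nhds
      (show (0 : ℝ) < (2 : ℂ).re by norm_num)] with s hs
    exact Complex.Gamma_eq_integral hs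
  have hderiv : HasDerivAt Complex.Gamma (1 - eulerMascheroniConstant : ℂ) 2 := by
    have hnat := Complex.hasDerivAt_Gamma_nat 1
    norm_num at hnat
    rwa [neg_add_eq_sub] at hnat
  have hint := ((Complex.hasDerivAt_GammaIntegral (s := 2) (by norm_num)).congr_of_eventuallyEq
    hGamma).unique hderiv
  rw [← Complex.ofReal_inj, ← integral_complex_ofReal]
  push_cast
  rw [← hint]
  refine setIntegral_congr_fun measurableSet_Ioi fun u _ ↦ ?_
  rw [show (2 - 1 : ℂ) = 1 by norm_num, Complex.cpow_one]
  push_cast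
  ring

namespace HasLogLinearAsymptotics

variable {F : ℝ → ℝ} {b : ℝ}

lemma exists_abs_sub_mul_log_le (hF : HasLogLinearAsymptotics F b) (hcont : Continuous F) :
    ∃ K, ∀ x, 0 ≤ x → |F x - x * Real.log x| ≤ K * (1 + x) := by
  obtain ⟨X, hX⟩ := eventually_atTop.1
    ((hF.abs.eventually (gt_mem_nhds (lt_add_one |b|))).and (eventually_gt_atTop 0))
  obtain ⟨K, hK⟩ := isCompact_Icc.exists_bound_of_continuousOn (s := Icc 0 X)
    (hcont.sub Real.continuous_mul_log).continuousOn
  refine ⟨|K| + (|b| + 1), fun x hx ↦ ?_⟩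
  rcases le_total x X with hxX | hXx
  · refine (hK x ⟨hx, hxX⟩).trans ((le_abs_self K).trans ?_)
    nlinarith [abs_nonneg K, abs_nonneg b]
  · obtain ⟨hlt, hx0⟩ := hX x hXx
    rw [show F x - x * Real.log x = (F x / x - Real.log x) * x by field_simp, abs_mul,
      abs_of_pos hx0]
    nlinarith [abs_nonneg K, abs_nonneg b]

lemma tendsto_comp_mul_div_sub (hF : HasLogLinearAsymptotics F b) {u : ℝ} (hu : 0 < u) :
    Tendsto (fun T ↦ F (T * u) / T - u * Real.log T) atTop (𝓝 (u * Real.log u + b * u)) := by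
  refine (((hF.comp (tendsto_id.atTop_mul_const hu)).add_const (Real.log u)).const_mul u).congr' ?_
    |>.trans_eq (by ring_nf)
  filter_upwards [eventually_gt_atTop 0] with T hT
  rw [Function.comp_apply, id, Real.log_mul hT.ne' hu.ne']
  field_simp
  ring

end HasLogLinearAsymptotics

namespace HasLogLinearAsymptotics

variable {F : ℝ → ℝ} {b : ℝ}

lemma abs_comp_mul_div_sub_le {K : ℝ} (hK : ∀ x, 0 ≤ x → |F x - x * Real.log x| ≤ K * (1 + x))
    {T u : ℝ} (hT : 1 ≤ T) (hu : 0 < u) :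
    |F (T * u) / T - u * Real.log T| ≤ |u * Real.log u| + K * (1 + u) := by
  have hT0 : 0 < T := by linarith
  have hK0 : 0 ≤ K := by simpa using (abs_nonneg _).trans (hK 0 le_rfl)
  have hsplit : F (T * u) / T - u * Real.log T
      = u * Real.log u + (F (T * u) - T * u * Real.log (T * u)) / T := by
    rw [Real.log_mul hT0.ne' hu.ne']
    field_simp
    ring
  rw [hsplit]
  refine (abs_add_le _ _).trans (add_le_add_right ?_ _)
  rw [abs_div, abs_of_pos hT0, div_le_iff₀ hT0, mul_assoc K]
  have hle : 1 + T * u ≤ (1 + u) * T := by linarith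
  exact (hK _ (by positivity)).trans (mul_le_mul_of_nonneg_left hle hK0)

lemma integrableOn_comp_mul_div_sub_bound (K : ℝ) :
    IntegrableOn (fun u ↦ (|u * Real.log u| + K * (1 + u)) * Real.exp (-u)) (Ioi 0) := by
  refine (integrableOn_mul_log_mul_exp_neg.norm.add (((integrableOn_pow_mul_exp_neg 0).add
    (integrableOn_pow_mul_exp_neg 1)).const_mul K)).congr (ae_of_all _ fun u ↦ ?_)
  simp only [Pi.add_apply, norm_mul, Real.norm_eq_abs, abs_mul, Real.abs_exp]
  ring

lemma integrableOn_comp_mul_div_sub (hF : HasLogLinearAsymptotics F b) (hcont : Continuous F)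
    {T : ℝ} (hT : 1 ≤ T) :
    IntegrableOn (fun u ↦ (F (T * u) / T - u * Real.log T) * Real.exp (-u)) (Ioi 0) := by
  obtain ⟨K, hK⟩ := hF.exists_abs_sub_mul_log_le hcont
  refine (integrableOn_comp_mul_div_sub_bound K).mono' (by fun_prop) ?_
  filter_upwards [ae_restrict_mem measurableSet_Ioi] with u hu
  rw [norm_mul, Real.norm_of_nonneg (Real.exp_pos _).le]
  exact mul_le_mul_of_nonneg_right (abs_comp_mul_div_sub_le hK hT hu) (Real.exp_pos _).le

lemma tendsto_integral_comp_mul_div_sub (hF : HasLogLinearAsymptotics F b)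
    (hcont : Continuous F) :
    Tendsto (fun T ↦ ∫ u in Ioi (0 : ℝ), (F (T * u) / T - u * Real.log T) * Real.exp (-u)) atTop
      (𝓝 (b + 1 - eulerMascheroniConstant)) := by
  obtain ⟨K, hK⟩ := hF.exists_abs_sub_mul_log_le hcont
  have hlimit : ∫ u in Ioi (0 : ℝ), (u * Real.log u + b * u) * Real.exp (-u)
      = b + 1 - eulerMascheroniConstant := by
    have hlin : IntegrableOn (fun u ↦ u * Real.exp (-u)) (Ioi 0) := by
      simpa using integrableOn_pow_mul_exp_neg 1
    simp only [add_mul, mul_assoc b]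
    rw [integral_add integrableOn_mul_log_mul_exp_neg (hlin.const_mul b), integral_const_mul,
      integral_mul_log_mul_exp_neg, integral_mul_exp_neg]
    ring
  rw [← hlimit]
  refine tendsto_integral_filter_of_dominated_convergence _ (.of_forall fun T ↦ by fun_prop) ?_
    (integrableOn_comp_mul_div_sub_bound K) ?_
  · filter_upwards [eventually_ge_atTop 1] with T hT
    filter_upwards [ae_restrict_mem measurableSet_Ioi] with u hu
    rw [norm_mul, Real.norm_of_nonneg (Real.exp_pos _).le]
    exact mul_le_mul_of_nonneg_right (abs_comp_mul_div_sub_le hK hT hu) (Real.exp_pos _).le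
  · filter_upwards [ae_restrict_mem measurableSet_Ioi] with u hu
    exact (hF.tendsto_comp_mul_div_sub hu).mul_const _

theorem integral_comp_mul_mul_exp_neg (hF : HasLogLinearAsymptotics F b) (hcont : Continuous F) :
    HasLogLinearAsymptotics (fun T ↦ ∫ u in Ioi (0 : ℝ), F (T * u) * Real.exp (-u))
      (b + 1 - eulerMascheroniConstant) := by
  refine (hF.tendsto_integral_comp_mul_div_sub hcont).congr' ?_
  filter_upwards [eventually_ge_atTop 1] with T hT
  have hlin : IntegrableOn (fun u ↦ u * Real.exp (-u)) (Ioi 0) := by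
    simpa using integrableOn_pow_mul_exp_neg 1
  have hlog : Real.log T = ∫ u in Ioi (0 : ℝ), Real.log T * (u * Real.exp (-u)) := by
    rw [integral_const_mul, integral_mul_exp_neg, mul_one]
  have hadd := integral_add (hF.integrableOn_comp_mul_div_sub hcont hT)
    (hlin.const_mul (Real.log T))
  rw [← hlog] at hadd
  rw [eq_sub_iff_add_eq, ← hadd, ← integral_div]
  refine setIntegral_congr_fun measurableSet_Ioi fun u _ ↦ ?_
  ring

lemma tendsto_div_mul_log (hF : HasLogLinearAsymptotics F b) :
    Tendsto (fun x ↦ F x / (x * Real.log x)) atTop (𝓝 1) := by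
  refine (((hF.div_atTop tendsto_log_atTop).const_add 1).congr' ?_).trans_eq (by simp)
  filter_upwards [eventually_gt_atTop 0, tendsto_log_atTop.eventually_gt_atTop 0] with x hx hlog
  field_simp
  ring

end HasLogLinearAsymptotics

lemma continuous_meanSquare : Continuous meanSquare :=
  intervalIntegral.continuous_primitive (fun _ _ ↦ continuous_Z2.intervalIntegrable _ _) 0

/-- The mean square of Hardy's function on `(0, ∞)` with the smooth cutoff `exp (-t / T)`. -/
noncomputable def smoothMeanSquare (T : ℝ) : ℝ :=
  ∫ t in Ioi (0 : ℝ), Z2 t * Real.exp (-(T⁻¹ * t))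

lemma smoothMeanSquare_eq_integral_meanSquare {T : ℝ} (hT : 0 < T) :
    smoothMeanSquare T = ∫ u in Ioi (0 : ℝ), meanSquare (T * u) * Real.exp (-u) := by
  have hlaplace := integral_meanSquare_mul_cexp (δ := (T⁻¹ : ℝ)) (by simpa using hT)
  have hreal : ∫ x in Ioi (0 : ℝ), meanSquare x * Real.exp (-(T⁻¹ * x))
      = T * smoothMeanSquare T := by
    rw [← Complex.ofReal_inj, ← integral_complex_ofReal, Complex.ofReal_mul,
      smoothMeanSquare,
      ← hardyLaplace_ofReal]
    push_cast at hlaplace ⊢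
    rwa [inv_inv] at hlaplace
  have hscale := integral_comp_mul_left_Ioi
    (fun x ↦ meanSquare x * Real.exp (-(T⁻¹ * x))) 0 hT
  simp only [inv_mul_cancel_left₀ hT.ne', mul_zero, hreal, smul_eq_mul] at hscale
  exact hscale.symm

theorem hasLogLinearAsymptotics_smoothMeanSquare :
    HasLogLinearAsymptotics smoothMeanSquare
      (eulerMascheroniConstant - Real.log (2 * π)) := by
  refine ((hasLogLinearAsymptotics_meanSquare.integral_comp_mul_mul_exp_neg
    continuous_meanSquare).congr' ?_).trans_eq (by ring_nf)
  filter_upwards [eventually_gt_atTop 0] with T hT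
  rw [smoothMeanSquare_eq_integral_meanSquare hT]

/-! ### Truncation -/

lemma setIntegral_Ioi_mul_exp_le {f : ℝ → ℝ} {σ m : ℝ} (hf : ∀ t, 0 ≤ f t) (hm : 0 ≤ m)
    (hσ : 0 < σ) (hint : IntegrableOn (fun t ↦ f t * Real.exp (-(σ * t))) (Ioi 0))
    (hint₂ : IntegrableOn (fun t ↦ f t * Real.exp (-(2 * σ * t))) (Ioi 0)) :
    ∫ t in Ioi m, f t * Real.exp (-(2 * σ * t))
      ≤ Real.exp (-(σ * m)) * ∫ t in Ioi 0, f t * Real.exp (-(σ * t)) := by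
  have hsub : Ioi m ⊆ Ioi 0 := Ioi_subset_Ioi hm
  calc ∫ t in Ioi m, f t * Real.exp (-(2 * σ * t))
      ≤ ∫ t in Ioi m, Real.exp (-(σ * m)) * (f t * Real.exp (-(σ * t))) := by
        refine setIntegral_mono_on (hint₂.mono_set hsub) ((hint.mono_set hsub).const_mul _)
          measurableSet_Ioi fun t ht ↦ ?_
        rw [mul_left_comm, ← Real.exp_add]
        refine mul_le_mul_of_nonneg_left (Real.exp_le_exp.2 ?_) (hf t)
        nlinarith [mem_Ioi.1 ht]
    _ = Real.exp (-(σ * m)) * ∫ t in Ioi m, f t * Real.exp (-(σ * t)) := integral_const_mul _ _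
    _ ≤ _ := by
        refine mul_le_mul_of_nonneg_left (setIntegral_mono_set hint ?_ hsub.eventuallyLE)
          (Real.exp_pos _).le
        exact ae_of_all _ fun t ↦ mul_nonneg (hf t) (Real.exp_pos _).le

/-- The mean square of Hardy's function on `(0, m)` with the smooth cutoff `exp (-t / T)`. -/
noncomputable def truncatedMeanSquare (m T : ℝ) : ℝ :=
  ∫ t in (0 : ℝ)..m, Z2 t * Real.exp (-(T⁻¹ * t))

lemma truncatedMeanSquare_add {m T : ℝ} (hm : 0 ≤ m) (hT : 0 < T) :
    truncatedMeanSquare m T + ∫ t in Ioi m, Z2 t * Real.exp (-(T⁻¹ * t)) = smoothMeanSquare T := by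
  have hint := integrableOn_Z2_mul_exp (inv_pos.2 hT)
  rw [truncatedMeanSquare, smoothMeanSquare]
  exact intervalIntegral.integral_interval_add_Ioi hint (hint.mono_set (Ioi_subset_Ioi hm))

lemma truncatedMeanSquare_le {m T : ℝ} (hm : 0 ≤ m) (hT : 0 < T) :
    truncatedMeanSquare m T ≤ smoothMeanSquare T := by
  rw [← truncatedMeanSquare_add hm hT]
  exact le_add_of_nonneg_right (integral_nonneg fun t ↦
    mul_nonneg (Z2_nonneg t) (Real.exp_pos _).le)

lemma sub_le_truncatedMeanSquare {m T : ℝ} (hm : 0 ≤ m) (hT : 0 < T) :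
    smoothMeanSquare T - Real.exp (-(m / (2 * T))) * smoothMeanSquare (2 * T)
      ≤ truncatedMeanSquare m T := by
  have hT2 : 0 < (2 * T)⁻¹ := by positivity
  have htwo : 2 * (2 * T)⁻¹ = T⁻¹ := by field_simp
  have htail := setIntegral_Ioi_mul_exp_le Z2_nonneg hm hT2 (integrableOn_Z2_mul_exp hT2)
    (by simpa only [htwo] using integrableOn_Z2_mul_exp (inv_pos.2 hT))
  rw [htwo, inv_mul_eq_div] at htail
  rw [← truncatedMeanSquare_add hm hT, sub_le_iff_le_add]
  gcongr
  exact htail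

lemma hasLogLinearAsymptotics_truncatedMeanSquare {m : ℝ → ℝ}
    (hm : Tendsto (fun T ↦ Real.exp (-(m T / (2 * T))) * Real.log T) atTop (𝓝 0)) :
    HasLogLinearAsymptotics (fun T ↦ truncatedMeanSquare (m T) T)
      (eulerMascheroniConstant - Real.log (2 * π)) := by
  have hS := hasLogLinearAsymptotics_smoothMeanSquare
  have herror : Tendsto (fun T ↦ Real.exp (-(m T / (2 * T))) * smoothMeanSquare (2 * T) / T) atTop
      (𝓝 0) := by
    have hdilate := (hS.const_mul_comp_div one_half_pos).tendsto_div_mul_log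
    refine ((hm.mul hdilate).const_mul 2).congr' ?_ |>.trans_eq (by simp)
    filter_upwards [eventually_gt_atTop 0, tendsto_log_atTop.eventually_gt_atTop 0] with T hT hlog
    rw [show T / (1 / 2) = 2 * T by ring]
    field_simp
  have hlower := Tendsto.sub hS herror
  rw [sub_zero] at hlower
  refine tendsto_of_tendsto_of_tendsto_of_le_of_le' hlower hS ?_ ?_
  all_goals
    filter_upwards [eventually_gt_atTop 0, tendsto_log_atTop.eventually_ge_atTop 1,
      hm.eventually (gt_mem_nhds one_pos)] with T hT hlog hlt
    have hmT : 0 ≤ m T := by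
      by_contra! hneg
      have : 1 ≤ Real.exp (-(m T / (2 * T))) :=
        Real.one_le_exp (neg_nonneg.2 (div_nonpos_of_nonpos_of_nonneg hneg.le (by positivity)))
      nlinarith
  · rw [sub_right_comm, ← sub_div]
    gcongr
    exact sub_le_truncatedMeanSquare hmT hT
  · gcongr
    exact truncatedMeanSquare_le hmT hT

theorem tendsto_div_half_sub_one_mul_log {μ M : ℝ → ℝ}
    (hμ : Tendsto (fun y ↦ Real.exp (-(μ y / y)) * Real.log y) atTop (𝓝 0))
    (hM : ∀ᶠ y in atTop,
      (∫ t in (0 : ℝ)..μ y, Z2 t * Real.exp (-2 * t / y)) = ∫ t in (0 : ℝ)..M y, Z2 t) :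
    Tendsto (fun y ↦ (M y / (y / 2) - 1) * Real.log (y / 2)) atTop
      (𝓝 (1 - eulerMascheroniConstant)) := by
  have hdouble : Tendsto (fun T : ℝ ↦ 2 * T) atTop atTop := tendsto_id.const_mul_atTop two_pos
  have hhalf : Tendsto (fun y : ℝ ↦ y / 2) atTop atTop := tendsto_id.atTop_div_const two_pos
  have hcutoff : Tendsto (fun T ↦ Real.exp (-(μ (2 * T) / (2 * T))) * Real.log T) atTop (𝓝 0) := by
    refine squeeze_zero' ?_ ?_ (hμ.comp hdouble)
    all_goals filter_upwards [eventually_ge_atTop 1] with T hT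
    · exact mul_nonneg (Real.exp_pos _).le (Real.log_nonneg hT)
    · rw [Function.comp_apply]
      gcongr
      linarith
  have hmatch : Tendsto (fun T ↦ meanSquare (M (2 * T)) / T - Real.log T) atTop
      (𝓝 (1 - eulerMascheroniConstant
        + (2 * eulerMascheroniConstant - 1 - Real.log (2 * π)))) := by
    refine ((hasLogLinearAsymptotics_truncatedMeanSquare hcutoff).congr' ?_).trans_eq (by ring_nf)
    filter_upwards [hdouble.eventually hM] with T hMT
    rw [meanSquare, ← hMT, truncatedMeanSquare]
    congr! 6
    field_simp
  refine ((hasLogLinearAsymptotics_meanSquare.tendsto_sub_one_mul_log monotone_meanSquare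
    hmatch).comp hhalf).congr fun y ↦ ?_
  rw [Function.comp_apply, mul_div_cancel₀ y two_ne_zero]

lemma tendsto_exp_neg_div_mul_log {μ : ℝ → ℝ} (hμ : ∀ᶠ y in atTop, y * Real.log y ≤ μ y) :
    Tendsto (fun y ↦ Real.exp (-(μ y / y)) * Real.log y) atTop (𝓝 0) := by
  refine squeeze_zero' ?_ ?_ (tendsto_rpow_neg_mul_log one_pos)
  all_goals filter_upwards [hμ, eventually_gt_atTop 1] with y hy hy1
  · exact mul_nonneg (Real.exp_pos _).le (Real.log_nonneg hy1.le)
  · have hy0 : 0 < y := by linarith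
    rw [Real.rpow_neg_one, ← Real.exp_log (inv_pos.2 hy0), Real.log_inv]
    gcongr
    · exact Real.log_nonneg hy1.le
    · rwa [le_div_iff₀' hy0]

end HardyZ

theorem M_close_to_half_general {μ M : ℝ → ℝ}
    (hμ : Tendsto (fun y ↦ Real.exp (-(μ y / y)) * Real.log y) atTop (nhds 0))
    (hM : ∀ᶠ y in atTop,
      (∫ t in (0 : ℝ)..μ y, Z2 t * Real.exp (-2 * t / y)) = ∫ t in (0 : ℝ)..M y, Z2 t)
    {A : ℝ} (hA : 1 - Real.eulerMascheroniConstant < A) :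
    ∀ᶠ y in atTop, 0 < M y - y / 2 ∧ M y - y / 2 < (A / 2) * y / Real.log (y / 2) := by
  have hlim := HardyZ.tendsto_div_half_sub_one_mul_log hμ hM
  have hpos : 0 < 1 - Real.eulerMascheroniConstant := by
    linarith [Real.eulerMascheroniConstant_lt_two_thirds]
  filter_upwards [hlim.eventually (lt_mem_nhds hpos), hlim.eventually (gt_mem_nhds hA),
    eventually_gt_atTop 2] with y hlower hupper hy
  have hlog : 0 < Real.log (y / 2) := Real.log_pos (by linarith)
  have hexcess : M y / (y / 2) - 1 = (M y - y / 2) / (y / 2) := by field_simp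
  rw [hexcess] at hlower hupper
  refine ⟨(div_pos_iff_of_pos_right (by linarith)).1
    (pos_of_mul_pos_left hlower hlog.le), ?_⟩
  rw [lt_div_iff₀ hlog]
  rw [div_mul_eq_mul_div, div_lt_iff₀ (by linarith)] at hupper
  linarith

/-- For `μ` in the admissible class and `M = M_μ`, there exists `A > 1 − c` such that for all
sufficiently large `y`: `0 < M(y) − y/2 < (A/2) · y / ln(y/2)`, where `c` is the
Euler–Mascheroni constant. -/
theorem M_close_to_half (y₀ : ℝ) (μ M : ℝ → ℝ)
    (hμC : ContDiffOn ℝ (⊤ : ℕ∞) μ (Set.Ici y₀))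
    (hμmono : StrictMonoOn μ (Set.Ici y₀))
    (hμtop : Tendsto μ atTop atTop)
    (hμpos : ∀ y ∈ Set.Ici y₀, 0 < μ y)
    (hμgrow : ∀ y ∈ Set.Ici y₀, 7 * y * Real.log y ≤ μ y)
    (hMpos : ∀ y ∈ Set.Ici y₀, 0 < M y)
    (hM : ∀ y ∈ Set.Ici y₀,
      (∫ t in (0:ℝ)..μ y, Z2 t * Real.exp (-2 * t / y)) = ∫ t in (0:ℝ)..M y, Z2 t) :
    ∃ A : ℝ, 1 - Real.eulerMascheroniConstant < A ∧
      ∀ᶠ y in atTop, 0 < M y - y/2 ∧ M y - y/2 < (A/2) * y / Real.log (y/2) := by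
  have hγ : 1 - Real.eulerMascheroniConstant < 1 := by
    linarith [Real.one_half_lt_eulerMascheroniConstant]
  have hgrowth : ∀ᶠ y in atTop, y * Real.log y ≤ μ y := by
    filter_upwards [eventually_ge_atTop y₀, eventually_ge_atTop 1] with y hy hy1
    have : 0 ≤ y * Real.log y := mul_nonneg (by linarith) (Real.log_nonneg hy1)
    linarith [hμgrow y hy]
  exact ⟨1, hγ, M_close_to_half_general (HardyZ.tendsto_exp_neg_div_mul_log hgrowth)
    ((eventually_ge_atTop y₀).mono hM) hγ⟩
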